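/- Let G be a finite soluble group with trivial Frattini subgroup, and let V be a chief factor of G and U a nontrivial normal subgroup of G with I_G(V) = R_G(V) × U. Assume V is abelian and non-central in G, let H = H_V = G/C_G(V), q = q_V, n = n_V, δ = δ_V(G), and let α_U be defined as follows: α_U = Σ_{0≤i≤δ−1} q^δ/(q^δ − q^i) if H = 1, and α_U = min{ (δθ + m + q/(q−1))·(1/p_V) , (⌈δθ/n⌉ + q^n/(q^n − 1))·|H| } otherwise, where θ = 0 if δ = 1 and θ = 1 otherwise, and m = dim_{End_G(V)} H^1(H,V). Then α_U/√|G| < (5/3)·(√|U| − 1)/√|U|, except when |H| < |V| and one of the following holds: (1) δ = 2, q^n = 4 and |R_G(V)| = 1; (2) δ = 2, q^n = 3 and |R_G(V)| ≤ 2; (3) δ = 1, 4 ≤ q^n ≤ 7 and |R_G(V)| = 1; (4) δ = 1, q^n = 3 and |R_G(V)| ≤ 3. -/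

import Mathlib

/-!
Definitions supporting the formalization of
"An upper bound on the Chebotarev invariant of a finite group" (Lucchini–Tracey).
-/

open scoped BigOperators

namespace ChebotarevPaper

/-- A `k`-tuple of elements of `G` invariably generates `G` if, replacing each entry by an
arbitrary conjugate, the resulting elements always generate `G`. -/
def InvGen (G : Type*) [Group G] {k : ℕ} (f : Fin k → G) : Prop :=
  ∀ c : Fin k → G, Subgroup.closure (Set.range fun i => c i * f i * (c i)⁻¹) = ⊤

/-- The probability that `k` independent uniformly random elements of `G` invariably
generate `G`. -/
noncomputable def probInvGen (G : Type*) [Group G] (k : ℕ) : ℝ :=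
  Nat.card {f : Fin k → G // InvGen G f} / (Nat.card G : ℝ) ^ k

/-- The Chebotarev invariant `C(G)`:  `C(G) = Σ_{k ≥ 0} (1 − P_I(G,k))`, where `P_I(G,k)`
is the probability that `k` independent uniformly random elements of `G` invariably
generate `G`. -/
noncomputable def cheb (G : Type*) [Group G] : ℝ :=
  ∑' k : ℕ, (1 - probInvGen G k)

/-- The probability that `k` independent uniformly random elements of `G` generate `G`. -/
noncomputable def probGen (G : Type*) [Group G] (k : ℕ) : ℝ :=
  Nat.card {f : Fin k → G // Subgroup.closure (Set.range f) = ⊤} / (Nat.card G : ℝ) ^ k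

/-- The expected number of uniformly random elements of `G` needed to generate `G`. -/
noncomputable def expectedGen (G : Type*) [Group G] : ℝ :=
  ∑' k : ℕ, (1 - probGen G k)

/-- `d(G)`: the minimal number of generators of `G`. -/
noncomputable def minGen (G : Type*) [Group G] : ℕ :=
  sInf {n | ∃ f : Fin n → G, Subgroup.closure (Set.range f) = ⊤}

/-- `σ` has the defining property of the constant `σ = 2.118456563…` of Pomerance:
for every finite group `X`, the expected number of uniformly random elements needed to
generate `X` is at most `d(X) + σ`. -/
def IsPomeranceConst (σ : ℝ) : Prop :=
  ∀ (X : Type) [Group X] [Finite X], expectedGen X ≤ minGen X + σ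

variable (G : Type*) [Group G]

/-- `(X, Y)` is a chief factor of `G`:  both are normal in `G`, `Y < X`, and no normal
subgroup of `G` lies strictly between them (i.e. `X/Y` is a minimal normal subgroup of
`G/Y`). -/
def IsChiefFactorPair (X Y : Subgroup G) : Prop :=
  X.Normal ∧ Y.Normal ∧ Y < X ∧
    ∀ N : Subgroup G, N.Normal → Y ≤ N → N ≤ X → N = Y ∨ N = X

/-- The chief factor `X/Y` is complemented: there is `U ≤ G` with `UX = G` and
`U ⊓ X = Y`. -/
def IsComplementedFactor (X Y : Subgroup G) : Prop :=
  ∃ U : Subgroup G, U ⊔ X = ⊤ ∧ U ⊓ X = Y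

/-- The chief factor `X/Y` is a Frattini chief factor, i.e. `X/Y ≤ Frat(G/Y)`;
equivalently (and this is how we state it), `X/Y` is abelian and has no complement
in `G`. -/
def IsFrattiniFactor (X Y : Subgroup G) : Prop :=
  (∀ a b : G, a ∈ X → b ∈ X → a * b * a⁻¹ * b⁻¹ ∈ Y) ∧ ¬ IsComplementedFactor G X Y

/-- The chief factor `X/Y` is central in `G`, i.e. `X/Y ≤ Z(G/Y)`. -/
def IsCentralFactor (X Y : Subgroup G) : Prop :=
  ∀ g x : G, x ∈ X → g * x * g⁻¹ * x⁻¹ ∈ Y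

/-- The `G`-group `V` (a group with an action `a : G →* MulAut V` of `G` by automorphisms)
is `G`-isomorphic to the chief factor `X/Y` (on which `G` acts by conjugation): there is a
surjective homomorphism `X →* V` with kernel `Y` transforming conjugation by `g ∈ G` into
the action of `g` on `V`. -/
def RepresentsFactor {V : Type*} [Group V] (a : G →* MulAut V) (X Y : Subgroup G) : Prop :=
  ∃ f : X →* V, Function.Surjective f ∧ (∀ x : X, f x = 1 ↔ (x : G) ∈ Y) ∧
    ∀ (g : G) (x y : X), (y : G) = g * (x : G) * g⁻¹ → f y = a g (f x)

/-- Two `G`-groups `(V₁, a₁)`, `(V₂, a₂)` are `G`-equivalent: there are isomorphisms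
`φ : V₁ ≃* V₂` and `Φ : V₁ ⋊ G ≃* V₂ ⋊ G` making the natural diagram of the two
extensions `1 → Vᵢ → Vᵢ ⋊ G → G → 1` commute. -/
def GEquiv {V₁ V₂ : Type*} [Group V₁] [Group V₂]
    (a₁ : G →* MulAut V₁) (a₂ : G →* MulAut V₂) : Prop :=
  ∃ (φ : V₁ ≃* V₂) (Φ : (V₁ ⋊[a₁] G) ≃* (V₂ ⋊[a₂] G)),
    (∀ v : V₁, Φ (SemidirectProduct.inl v) = SemidirectProduct.inl (φ v)) ∧
    ∀ x, (Φ x).right = x.right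

/-- `G`-isomorphism of `G`-groups. -/
def GIso {V₁ V₂ : Type*} [Group V₁] [Group V₂]
    (a₁ : G →* MulAut V₁) (a₂ : G →* MulAut V₂) : Prop :=
  ∃ φ : V₁ ≃* V₂, ∀ (g : G) (v : V₁), φ (a₁ g v) = a₂ g (φ v)

/-- `N` is a minimal normal subgroup of `G`. -/
def IsMinimalNormal (N : Subgroup G) : Prop :=
  N.Normal ∧ N ≠ ⊥ ∧ ∀ M : Subgroup G, M.Normal → M ≠ ⊥ → M ≤ N → M = N

/-- The socle of `G`: the subgroup generated by all minimal normal subgroups of `G`. -/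
def socle : Subgroup G := sSup {N : Subgroup G | IsMinimalNormal G N}

instance socle_normal : (socle G).Normal := by
  constructor
  intro n hn g
  have h : socle G ≤ (socle G).comap (MulAut.conj g).toMonoidHom := by
    rw [socle]
    apply sSup_le
    intro N hN x hx
    have h1 : (MulAut.conj g).toMonoidHom x ∈ N := by
      simpa [MulAut.conj_apply] using hN.1.conj_mem x hx g
    exact Subgroup.mem_comap.2 (le_sSup hN h1)
  have h2 := h hn
  simpa [MulAut.conj_apply] using h2

/-- The action of `G` (by conjugation, through `f : G →* Q`) on the socle of `Q`. -/
def socAct {Q : Type*} [Group Q] (f : G →* Q) : G →* MulAut (socle Q) :=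
  MulAut.conjNormal.comp f

/-- The diagonal action of `G` on `V × V` induced by an action on `V`. -/
def prodAct {V : Type*} [Group V] (a : G →* MulAut V) : G →* MulAut (V × V) where
  toFun g := MulEquiv.prodCongr (a g) (a g)
  map_one' := by
    ext x <;> simp [MulEquiv.prodCongr, MulAut.one_apply]
  map_mul' g h := by
    ext x <;> simp [MulEquiv.prodCongr, MulAut.mul_apply]

/-- The diagonal action of `H` on `V^u` induced by an action on `V`. -/
def diagAct (H : Type*) [Group H] {V : Type*} [Group V] (b : H →* MulAut V) (u : ℕ) :
    H →* MulAut (Fin u → V) where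
  toFun g := MulEquiv.piCongrRight fun _ => b g
  map_one' := by
    ext x i; simp
  map_mul' g h := by
    ext x i; simp [MulAut.mul_apply]

variable {G}

/-- The elements `gs 0, …, gs (k-1)` of `G` satisfy the `V`-property in `G`: they all lie
in the union of the `G`-conjugates of some maximal subgroup `M` of `G` such that the socle
of `G/core_G(M)` is `G`-equivalent to `V` or to `V × V`. -/
def SatisfyVProperty {V : Type*} [Group V] (a : G →* MulAut V) {k : ℕ}
    (gs : Fin k → G) : Prop :=
  ∃ M : Subgroup G, IsCoatom M ∧
    (GEquiv G (socAct G (QuotientGroup.mk' M.normalCore)) a ∨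
      GEquiv G (socAct G (QuotientGroup.mk' M.normalCore)) (prodAct G a)) ∧
    ∀ i, ∃ x : G, x * gs i * x⁻¹ ∈ M

/-- `P*_{G,V}(k)`: the probability that `k` independent uniformly random elements of `G`
satisfy the `V`-property in `G`. -/
noncomputable def pStar {V : Type*} [Group V] (a : G →* MulAut V) (k : ℕ) : ℝ :=
  Nat.card {gs : Fin k → G // SatisfyVProperty a gs} / (Nat.card G : ℝ) ^ k

/-- The collection of normal subgroups `N` of `G` such that `G/N` is isomorphic to the
monolithic primitive group `L_V` associated to `V` (that is, `V ⋊ (G/C_G(V))` if `V` is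
abelian and `G/C_G(V)` otherwise; here `C_G(V)` is the kernel of the action of `G` on
`V`) and the socle of `G/N` is `G`-equivalent to `V`. -/
def crownNormals {V : Type*} [Group V] (a : G →* MulAut V) : Set (Subgroup G) :=
  {N | ∃ _ : N.Normal,
    ((∀ x y : V, x * y = y * x) →
      Nonempty ((G ⧸ N) ≃* (V ⋊[QuotientGroup.kerLift a] (G ⧸ a.ker)))) ∧
    (¬ (∀ x y : V, x * y = y * x) → Nonempty ((G ⧸ N) ≃* (G ⧸ a.ker))) ∧
    GEquiv G (socAct G (QuotientGroup.mk' N)) a}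

/-- `R_G(V)`: the intersection of all normal subgroups `N` of `G` with `G/N ≅ L_V` and
`soc(G/N)` `G`-equivalent to `V`. -/
def crownRadical {V : Type*} [Group V] (a : G →* MulAut V) : Subgroup G :=
  sInf (crownNormals a)

instance crownRadical_normal {V : Type*} [Group V] (a : G →* MulAut V) :
    (crownRadical a).Normal := by
  constructor
  intro n hn g
  rw [crownRadical, Subgroup.mem_sInf] at hn ⊢
  intro p hp
  obtain ⟨hpN, hrest⟩ := hp
  exact hpN.conj_mem n (hn p ⟨hpN, hrest⟩) g

/-- `I_G(V)`: the preimage in `G` of the socle of `G/R_G(V)`; the `V`-crown of `G` is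
`I_G(V)/R_G(V)`. -/
def crownSocle {V : Type*} [Group V] (a : G →* MulAut V) : Subgroup G :=
  (socle (G ⧸ crownRadical a)).comap (QuotientGroup.mk' (crownRadical a))

/-- A chief series of `G`: a chain `⊥ = N_0 < N_1 < … < N_len = ⊤` of normal subgroups
of `G` in which each factor `N_{i+1}/N_i` is a chief factor of `G`. -/
structure ChiefSeries (G : Type*) [Group G] where
  len : ℕ
  ser : Fin (len + 1) → Subgroup G
  bot_eq : ser 0 = ⊥
  top_eq : ser (Fin.last len) = ⊤
  chief : ∀ i : Fin len, IsChiefFactorPair G (ser i.succ) (ser i.castSucc)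

/-- `δ_V(G)` (for a `G`-module `V`): the number of complemented factors in the chief
series `S` of `G` which are `G`-isomorphic to `V`. -/
noncomputable def deltaIso {V : Type*} [Group V] (a : G →* MulAut V)
    (S : ChiefSeries G) : ℕ :=
  Nat.card {i : Fin S.len //
    IsComplementedFactor G (S.ser i.succ) (S.ser i.castSucc) ∧
    RepresentsFactor G a (S.ser i.succ) (S.ser i.castSucc)}

/-- The chief factor `X/Y` of `G` is `G`-equivalent to the `G`-group `(V, a)`. -/
def FactorGEquiv (X Y : Subgroup G) {V : Type*} [Group V] (a : G →* MulAut V) : Prop :=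
  ∃ (W : Type) (_ : Group W) (b : G →* MulAut W),
    RepresentsFactor G b X Y ∧ GEquiv G b a

/-- `δ_V(G)` (for a `G`-group `V`): the number of non-Frattini factors in the chief
series `S` of `G` which are `G`-equivalent to `V`. -/
noncomputable def deltaEquiv {V : Type*} [Group V] (a : G →* MulAut V)
    (S : ChiefSeries G) : ℕ :=
  Nat.card {i : Fin S.len //
    ¬ IsFrattiniFactor G (S.ser i.succ) (S.ser i.castSucc) ∧
    FactorGEquiv (S.ser i.succ) (S.ser i.castSucc) a}

/-- Bundled `G`-group: a group together with an action of `G` by automorphisms. -/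
structure GGroup (G : Type) [Group G] : Type 1 where
  carrier : Type
  [grp : Group carrier]
  act : G →* MulAut carrier

attribute [instance] GGroup.grp

/-- The action `b` of `H` on `V` is irreducible: `V` is nontrivial and has no proper
nontrivial (normal) `H`-invariant subgroup. -/
def IsIrreducibleGGroup (H : Type*) [Group H] {V : Type*} [Group V]
    (b : H →* MulAut V) : Prop :=
  Nontrivial V ∧
    ∀ W : Subgroup V, W.Normal → (∀ (h : H) (v : V), v ∈ W → b h v ∈ W) → W = ⊥ ∨ W = ⊤

/-- The `H`-equivariant endomorphisms of `V` (for `H`-modules `V` this is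
`End_H(V)`). -/
def EquivEnd (H : Type*) [Group H] {V : Type*} [Group V] (b : H →* MulAut V) :=
  {f : V →* V // ∀ (h : H) (v : V), f (b h v) = b h (f v)}

/-- `q_V := |End_H(V)|`. -/
noncomputable def endCard (H : Type*) [Group H] {V : Type*} [Group V]
    (b : H →* MulAut V) : ℕ :=
  Nat.card (EquivEnd H b)

/-- `n_V := dim_{End_H(V)} V`, characterised by `|End_H(V)| ^ n_V = |V|` (for a finite
irreducible `H`-module `V`, `End_H(V)` is a field and `V` a vector space over it). -/
noncomputable def dimEnd (H : Type*) [Group H] {V : Type*} [Group V]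
    (b : H →* MulAut V) : ℕ :=
  sInf {n : ℕ | endCard H b ^ n = Nat.card V}

/-- The set of derivations `ζ : H → V` (satisfying `ζ(h₁h₂) = ζ(h₁)^{h₂} · ζ(h₂)`). -/
def DerSet (H : Type*) [Group H] {V : Type*} [Group V] (b : H →* MulAut V) :
    Set (H → V) :=
  {ζ | ∀ h₁ h₂ : H, ζ (h₁ * h₂) = b h₂ (ζ h₁) * ζ h₂}

/-- The set of inner derivations `h ↦ [h,v] = v^h · v⁻¹`. -/
def IderSet (H : Type*) [Group H] {V : Type*} [Group V] (b : H →* MulAut V) :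
    Set (H → V) :=
  {ζ | ∃ v : V, ∀ h : H, ζ h = b h v * v⁻¹}

/-- `m := dim_{End_H(V)} H¹(H,V)` where `H¹(H,V) = Der(H,V)/Ider(H,V)`, characterised by
`|End_H(V)| ^ m · |Ider(H,V)| = |Der(H,V)|`. -/
noncomputable def h1Dim (H : Type*) [Group H] {V : Type*} [Group V]
    (b : H →* MulAut V) : ℕ :=
  sInf {m : ℕ | endCard H b ^ m * Nat.card (IderSet H b) = Nat.card (DerSet H b)}

/-- The probability that a uniformly random element of `H` fixes a nonzero (i.e.
non-identity) vector of `V`. -/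
noncomputable def fixProb (H : Type*) [Group H] {V : Type*} [Group V]
    (b : H →* MulAut V) : ℝ :=
  Nat.card {h : H // ∃ v : V, v ≠ 1 ∧ b h v = v} / (Nat.card H : ℝ)

/-- `A` is a set of representatives for the irreducible `G`-modules which are
`G`-isomorphic to a chief factor of `G` satisfying `P`:  every member of `A` is an
irreducible abelian `G`-group `G`-isomorphic to some chief factor satisfying `P`, and
every chief factor of `G` satisfying `P` is `G`-isomorphic to exactly one member
of `A`. -/
def IsModuleRepSet {G : Type} [Group G] (P : Subgroup G → Subgroup G → Prop)
    (A : Finset (GGroup G)) : Prop :=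
  (∀ V ∈ A, (∀ x y : V.carrier, x * y = y * x) ∧ IsIrreducibleGGroup G V.act ∧
      ∃ X Y : Subgroup G, IsChiefFactorPair G X Y ∧ P X Y ∧ RepresentsFactor G V.act X Y) ∧
  ∀ X Y : Subgroup G, IsChiefFactorPair G X Y → P X Y →
    ∃! V : GGroup G, V ∈ A ∧ RepresentsFactor G V.act X Y

/-- `A` is a set of representatives for the irreducible `G`-groups which are
`G`-equivalent to a chief factor of `G` satisfying `P`. -/
def IsGGroupRepSet {G : Type} [Group G] (P : Subgroup G → Subgroup G → Prop)
    (A : Finset (GGroup G)) : Prop :=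
  (∀ V ∈ A, IsIrreducibleGGroup G V.act ∧
      ∃ X Y : Subgroup G, IsChiefFactorPair G X Y ∧ P X Y ∧ FactorGEquiv X Y V.act) ∧
  ∀ X Y : Subgroup G, IsChiefFactorPair G X Y → P X Y →
    ∃! V : GGroup G, V ∈ A ∧ FactorGEquiv X Y V.act

section Structural

variable {G : Type*} [Group G] {V : Type*} [Group V] {a : G →* MulAut V}

/-- irreducibility of the action -/
def Irr (a : G →* MulAut V) : Prop :=
  ∀ W : Subgroup V, (∀ g v, v ∈ W → a g v ∈ W) → W = ⊥ ∨ W = ⊤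

theorem irr_of_chief {X Y : Subgroup G} (hc : IsChiefFactorPair G X Y)
    (hr : RepresentsFactor G a X Y) : Irr a := by
  obtain ⟨hX, hY, hlt, hmin⟩ := hc
  obtain ⟨f, hs, hk, he⟩ := hr
  intro W hW
  have hmem : ∀ x : G, x ∈ (W.comap f).map X.subtype ↔ ∃ h : x ∈ X, f ⟨x, h⟩ ∈ W := by
    intro x
    simp [Subgroup.mem_map]
  have h1 := hmin ((W.comap f).map X.subtype) ?_ ?_ ?_
  · rcases h1 with h1 | h1
    · left
      rw [eq_bot_iff]
      intro v hv
      obtain ⟨x, rfl⟩ := hs v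
      have : (x : G) ∈ Y := by
        rw [← h1, hmem]
        exact ⟨x.2, hv⟩
      exact (hk x).2 this
    · right
      rw [eq_top_iff]
      intro v _
      obtain ⟨x, rfl⟩ := hs v
      exact ((hmem x).1 (h1.ge x.2)).2
  · constructor
    intro n hn g
    rw [hmem] at hn ⊢
    obtain ⟨hnX, hn⟩ := hn
    refine ⟨hX.conj_mem n hnX g, ?_⟩
    rw [he g ⟨n, hnX⟩ _ rfl]
    exact hW _ _ hn
  · intro y hy
    rw [hmem]
    refine ⟨hlt.le hy, ?_⟩
    rw [(hk ⟨y, hlt.le hy⟩).2 hy]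
    exact one_mem _
  · intro x hx
    rw [hmem] at hx
    exact hx.1

theorem chief_of_rep {X Y : Subgroup G} (hX : X.Normal) (_ : Y.Normal) (_ : Y ≤ X)
    (hr : RepresentsFactor G a X Y) (hi : Irr a) (N : Subgroup G) (hN : N.Normal)
    (h1 : Y ≤ N) (h2 : N ≤ X) : N = Y ∨ N = X := by
  obtain ⟨f, hs, hk, he⟩ := hr
  have := hi ((N.subgroupOf X).map f) ?_
  · rcases this with h | h
    · left
      refine le_antisymm ?_ h1
      intro n hn
      have : f ⟨n, h2 hn⟩ ∈ (N.subgroupOf X).map f := ⟨⟨n, h2 hn⟩, hn, rfl⟩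
      rw [h, Subgroup.mem_bot] at this
      exact (hk _).1 this
    · right
      refine le_antisymm h2 ?_
      intro x hx
      have : f ⟨x, hx⟩ ∈ (N.subgroupOf X).map f := by rw [h]; trivial
      obtain ⟨n, hn, hnx⟩ := this
      have h3 : f (⟨x, hx⟩ * n⁻¹) = 1 := by
        rw [map_mul, map_inv, hnx, mul_inv_cancel]
      have h4 := h1 ((hk _).1 h3)
      have h5 : (n : G) ∈ N := hn
      simpa using N.mul_mem h4 h5
  · rintro g v ⟨n, hn, rfl⟩
    have hn' : (n : G) ∈ N := hn
    refine ⟨⟨g * n * g⁻¹, hX.conj_mem _ n.2 g⟩, hN.conj_mem _ hn' g, ?_⟩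
    exact he g n _ rfl

theorem le_ker_of_comm {X Y L : Subgroup G} 
    (hr : RepresentsFactor G a X Y) (hX : X.Normal)
    (h : ∀ l ∈ L, ∀ x ∈ X, l * x * l⁻¹ * x⁻¹ ∈ Y) : L ≤ a.ker := by
  obtain ⟨f, hs, hk, he⟩ := hr
  intro l hl
  rw [MonoidHom.mem_ker]
  ext v
  obtain ⟨x, rfl⟩ := hs v
  rw [← he l x ⟨l * x * l⁻¹, hX.conj_mem _ x.2 l⟩ rfl]
  have := (hk (⟨l * x * l⁻¹, hX.conj_mem _ x.2 l⟩ * x⁻¹)).2 (h l hl x x.2)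
  rw [map_mul, map_inv, mul_inv_eq_one] at this
  simpa using this

theorem le_ker_of_inf {X Y L : Subgroup G} 
    (hr : RepresentsFactor G a X Y) (hX : X.Normal) (hL : L.Normal) (h : L ⊓ X ≤ Y) :
    L ≤ a.ker := by
  refine le_ker_of_comm hr hX fun l hl x hx => h ⟨?_, ?_⟩
  · have := L.mul_mem hl (hL.conj_mem _ (L.inv_mem hl) x)
    simpa [mul_assoc] using this
  · exact X.mul_mem (hX.conj_mem _ hx l) (X.inv_mem hx)

theorem comm_mem {X Y : Subgroup G} 
    (hr : RepresentsFactor G a X Y) (hX : X.Normal) {c x : G} (hc : c ∈ a.ker) (hx : x ∈ X) :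
    c * x * c⁻¹ * x⁻¹ ∈ Y := by
  obtain ⟨f, hs, hk, he⟩ := hr
  have h1 := he c ⟨x, hx⟩ ⟨c * x * c⁻¹, hX.conj_mem _ hx c⟩ rfl
  rw [MonoidHom.mem_ker.1 hc] at h1
  refine (hk (⟨c * x * c⁻¹, hX.conj_mem _ hx c⟩ * ⟨x, hx⟩⁻¹)).1 ?_
  rw [map_mul, map_inv, h1]
  simp

theorem le_ker_self {X Y : Subgroup G} (hab : ∀ x y : V, x * y = y * x)
    (hr : RepresentsFactor G a X Y) (hX : X.Normal) : X ≤ a.ker := by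
  refine le_ker_of_comm hr hX fun l hl x hx => ?_
  obtain ⟨f, hs, hk, he⟩ := hr
  refine (hk (⟨l, hl⟩ * ⟨x, hx⟩ * ⟨l, hl⟩⁻¹ * ⟨x, hx⟩⁻¹)).1 ?_
  rw [map_mul, map_mul, map_mul, map_inv, map_inv, hab (f ⟨l, hl⟩)]
  simp

theorem card_of_rep [Finite G] {X Y : Subgroup G} (hle : Y ≤ X)
    (hr : RepresentsFactor G a X Y) : Nat.card X = Nat.card V * Nat.card Y := by
  obtain ⟨f, hs, hk, he⟩ := hr
  have h1 : f.ker = Y.subgroupOf X := by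
    ext x
    rw [MonoidHom.mem_ker, hk]
    rfl
  have h2 := f.ker.index_mul_card
  rw [Subgroup.index_ker, MonoidHom.range_eq_top.2 hs, Subgroup.card_top, h1] at h2
  rw [← h2, Nat.card_congr (Subgroup.subgroupOfEquivOfLe hle).toEquiv]

theorem exists_lift {A B D : Type*} [Group A] [Group B] [Group D] (p : A →* B)
    (hp : Function.Surjective p) (r : A →* D) (h : ∀ x, p x = 1 → r x = 1) :
    ∃ g : B →* D, ∀ x, g (p x) = r x := by
  refine ⟨p.liftOfSurjective hp ⟨r, fun x hx => h x hx⟩, fun x => ?_⟩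
  exact MonoidHom.liftOfRightInverse_comp_apply p _ _ ⟨r, fun x hx => h x hx⟩ x

theorem gequiv_giso {V₁ : Type*} [Group V₁] {a₁ : G →* MulAut V₁}
    (hab : ∀ x y : V, x * y = y * x) (h : GEquiv G a₁ a) : GIso G a₁ a := by
  obtain ⟨φ, Φ, h1, h2⟩ := h
  refine ⟨φ, fun g v => ?_⟩
  have h3 : Φ (SemidirectProduct.inr g) =
      SemidirectProduct.inl (Φ (SemidirectProduct.inr g)).left * SemidirectProduct.inr g := by
    conv_lhs => rw [← SemidirectProduct.inl_left_mul_inr_right (Φ (SemidirectProduct.inr g)), h2]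
    simp
  have h4 := congrArg Φ (SemidirectProduct.inl_aut (φ := a₁) g v)
  rw [h1, map_mul, map_mul, h1, map_inv, map_inv, h3] at h4
  have h5 := congrArg SemidirectProduct.left h4
  simp at h5
  rw [h5, hab (_ : V) (a g (φ v))]
  simp

theorem giso_gequiv {V₁ : Type*} [Group V₁] {a₁ : G →* MulAut V₁}
    (h : GIso G a₁ a) : GEquiv G a₁ a := by
  obtain ⟨φ, h⟩ := h
  refine ⟨φ, SemidirectProduct.congr φ (MulEquiv.refl G) ?_, ?_, ?_⟩
  · intro g
    ext v
    simp [h]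
  · intro v
    ext <;> simp [SemidirectProduct.congr]
  · intro x
    simp [SemidirectProduct.congr]

/-- members of `crownNormals` -/
theorem crown_props [Finite G] [Finite V] [Nontrivial V] (hab : ∀ x y : V, x * y = y * x)
    (hi : Irr a) {N : Subgroup G} (hN : N ∈ crownNormals a) :
    N.Normal ∧ N ≤ a.ker ∧ RepresentsFactor G a a.ker N ∧ IsComplementedFactor G a.ker N := by
  obtain ⟨hNn, h1, -, h3⟩ := hN
  obtain ⟨ψ⟩ := h1 hab
  obtain ⟨φ, hφ⟩ := gequiv_giso hab h3
  set M : Subgroup G := (socle (G ⧸ N)).comap (QuotientGroup.mk' N) with hM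
  have hMn : M.Normal := by rw [hM]; infer_instance
  have hNM : N ≤ M := by
    intro n hn
    rw [hM, Subgroup.mem_comap, QuotientGroup.mk'_apply, (QuotientGroup.eq_one_iff n).2 hn]
    exact one_mem _
  have hrM : RepresentsFactor G a M N := by
    refine ⟨φ.toMonoidHom.comp ((QuotientGroup.mk' N).subgroupComap (socle (G ⧸ N))), ?_, ?_, ?_⟩
    · intro v
      obtain ⟨⟨s, hs⟩, rfl⟩ := φ.surjective v
      obtain ⟨g, rfl⟩ := QuotientGroup.mk'_surjective N s
      exact ⟨⟨g, hs⟩, rfl⟩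
    · intro x
      simp only [MonoidHom.comp_apply, MulEquiv.coe_toMonoidHom, map_eq_one_iff φ φ.injective]
      rw [← QuotientGroup.eq_one_iff, Subtype.ext_iff]
      rfl
    · intro g x y hxy
      simp only [MonoidHom.comp_apply, MulEquiv.coe_toMonoidHom]
      rw [← hφ]
      congr 1
      apply Subtype.ext
      change (QuotientGroup.mk' N) (y : G) = _
      rw [hxy]
      simp only [socAct, MonoidHom.comp_apply, MulAut.conjNormal_apply, map_mul, map_inv]
      rfl
  have hcard := card_of_rep hNM hrM
  have hMC := le_ker_self hab hrM hMn
  have hc2 : Nat.card a.ker = Nat.card V * Nat.card N := by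
    have e1 := Subgroup.card_eq_card_quotient_mul_card_subgroup N
    have e2 := Subgroup.card_eq_card_quotient_mul_card_subgroup a.ker
    rw [Nat.card_congr ψ.toEquiv, SemidirectProduct.card] at e1
    have : 0 < Nat.card (G ⧸ a.ker) := Nat.card_pos
    apply Nat.eq_of_mul_eq_mul_left this
    rw [← e2, e1]; ring
  have hMC' : M = a.ker := Subgroup.eq_of_le_of_card_ge hMC (by omega)
  rw [hMC'] at hrM hNM hcard
  refine ⟨hNn, hNM, hrM, ?_⟩
  set θ : G →* (V ⋊[QuotientGroup.kerLift a] (G ⧸ a.ker)) :=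
    ψ.toMonoidHom.comp (QuotientGroup.mk' N) with hθ
  have hθs : Function.Surjective θ := ψ.surjective.comp (QuotientGroup.mk'_surjective N)
  have hθk : ∀ x, θ x = 1 ↔ x ∈ N := by
    intro x
    simp [hθ]
  set P : Subgroup G := (SemidirectProduct.rightHom (φ := QuotientGroup.kerLift a)).ker.comap θ with hP
  have hPn : P.Normal := by rw [hP]; infer_instance
  have hNP : N ≤ P := by
    intro n hn
    rw [hP, Subgroup.mem_comap, (hθk n).2 hn]
    exact one_mem _
  have hPcard : Nat.card P = Nat.card a.ker := by
    have : P = (SemidirectProduct.rightHom.comp θ).ker := by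
      rw [hP, MonoidHom.comap_ker]
    have e1 := P.index_mul_card
    have hsj : Function.Surjective (SemidirectProduct.rightHom.comp θ) := by
      rw [MonoidHom.coe_comp]
      exact SemidirectProduct.rightHom_surjective.comp hθs
    rw [this, Subgroup.index_ker, MonoidHom.range_eq_top.2 hsj, Subgroup.card_top, ← this,
      Subgroup.card_eq_card_quotient_mul_card_subgroup a.ker] at e1
    exact Nat.eq_of_mul_eq_mul_left Nat.card_pos e1
  have hPC : P = a.ker := by
    have hkn : a.ker.Normal := inferInstance
    rcases chief_of_rep hkn hNn hNM hrM hi (P ⊓ a.ker) inferInstance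
      (le_inf hNP hNM) inf_le_right with h | h
    · have := le_ker_of_inf hrM hkn hPn h.le
      exact Subgroup.eq_of_le_of_card_ge this hPcard.ge
    · symm
      exact Subgroup.eq_of_le_of_card_ge (by rw [← h]; exact inf_le_left) hPcard.le
  refine ⟨(SemidirectProduct.inr (φ := QuotientGroup.kerLift a)).range.comap θ, ?_, ?_⟩
  · rw [eq_top_iff]
    intro g _
    obtain ⟨p, hp⟩ := hθs (SemidirectProduct.inl (θ g).left)
    have hpP : p ∈ a.ker := by
      rw [← hPC, hP, Subgroup.mem_comap, hp]
      simp [MonoidHom.mem_ker]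
    have : g = p * (p⁻¹ * g) := by group
    rw [this]
    refine Subgroup.mul_mem _ (Subgroup.mem_sup_right hpP) (Subgroup.mem_sup_left ?_)
    rw [Subgroup.mem_comap]
    refine ⟨(θ g).right, ?_⟩
    rw [map_mul, map_inv, hp, eq_inv_mul_iff_mul_eq, SemidirectProduct.inl_left_mul_inr_right]
  · ext x
    constructor
    · rintro ⟨⟨h, hh⟩, hx2⟩
      replace hx2 := hPC.ge hx2
      rw [hP] at hx2
      have hx2 : (θ x).right = 1 := hx2
      rw [← hθk, ← hh]
      rw [← hh] at hx2
      simp at hx2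
      rw [hx2, map_one]
    · intro hx
      refine ⟨⟨1, ?_⟩, hNM hx⟩
      rw [map_one, (hθk x).2 hx]

end Structural

section Structural2

variable {G : Type*} [Group G] {V : Type*} [Group V] {a : G →* MulAut V}

/-- a complement of `C_G(V)/N` produces a member of `crownNormals` -/
theorem crown_of_compl [Nontrivial V] (hab : ∀ x y : V, x * y = y * x)
    (hi : Irr a) {N : Subgroup G} (hNn : N.Normal) (hNC : N ≤ a.ker)
    (hr : RepresentsFactor G a a.ker N) (hc : IsComplementedFactor G a.ker N) :
    N ∈ crownNormals a := by
  have hr0 := hr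
  have hkn : a.ker.Normal := inferInstance
  obtain ⟨f, hs, hk, he⟩ := hr
  obtain ⟨K, hK1, hK2⟩ := hc
  have hdec : ∀ g : G, ∃ c ∈ a.ker, ∃ k ∈ K, c * k = g := by
    intro g
    have : g ∈ a.ker ⊔ K := by rw [sup_comm, hK1]; trivial
    exact Subgroup.mem_sup_of_normal_left.1 this
  obtain ⟨f1, hf1⟩ := exists_lift f hs ((QuotientGroup.mk' N).comp a.ker.subtype) (by
    intro x hx
    exact (QuotientGroup.eq_one_iff _).2 ((hk x).1 hx))
  have hps : Function.Surjective ((QuotientGroup.mk' a.ker).comp K.subtype) := by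
    intro x
    obtain ⟨g, rfl⟩ := QuotientGroup.mk'_surjective _ x
    obtain ⟨c, hc, k, hk, rfl⟩ := hdec g
    refine ⟨⟨k, hk⟩, ?_⟩
    have : QuotientGroup.mk' a.ker c = 1 := (QuotientGroup.eq_one_iff _).2 hc
    rw [map_mul, this, one_mul]
    rfl
  obtain ⟨f2, hf2⟩ := exists_lift ((QuotientGroup.mk' a.ker).comp K.subtype) hps
    ((QuotientGroup.mk' N).comp K.subtype) (by
    intro x hx
    refine (QuotientGroup.eq_one_iff _).2 ?_
    rw [← hK2]
    exact ⟨x.2, (QuotientGroup.eq_one_iff _).1 hx⟩)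
  have hf1i : ∀ v, f1 v = 1 → v = 1 := by
    intro v hv
    obtain ⟨c, rfl⟩ := hs v
    rw [hf1] at hv
    exact (hk c).2 ((QuotientGroup.eq_one_iff _).1 hv)
  have hf1e : ∀ g v, f1 (a g v) = QuotientGroup.mk' N g * f1 v * (QuotientGroup.mk' N g)⁻¹ := by
    intro g v
    obtain ⟨c, rfl⟩ := hs v
    rw [← he g c ⟨g * c * g⁻¹, hkn.conj_mem _ c.2 g⟩ rfl, hf1, hf1]
    simp
  have hf1r : f1.range = a.ker.map (QuotientGroup.mk' N) := by
    ext x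
    constructor
    · rintro ⟨v, rfl⟩
      obtain ⟨c, rfl⟩ := hs v
      exact ⟨c, c.2, (hf1 c).symm⟩
    · rintro ⟨c, hc, rfl⟩
      exact ⟨f ⟨c, hc⟩, hf1 _⟩
  have hmn : (a.ker.map (QuotientGroup.mk' N)).Normal :=
    hkn.map _ (QuotientGroup.mk'_surjective N)
  have hmin : IsMinimalNormal (G ⧸ N) (a.ker.map (QuotientGroup.mk' N)) := by
    refine ⟨hmn, ?_, ?_⟩
    · rw [← hf1r]
      intro h
      obtain ⟨v, hv⟩ := exists_ne (1 : V)
      apply hv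
      apply hf1i
      have : f1 v ∈ f1.range := ⟨v, rfl⟩
      rwa [h, Subgroup.mem_bot] at this
    · intro M hM hMb hle
      have h1 : M.comap (QuotientGroup.mk' N) ≤ a.ker := by
        intro x hx
        obtain ⟨c, hc, hcx⟩ := hle hx
        have : c⁻¹ * x ∈ N := QuotientGroup.eq.1 hcx
        simpa using a.ker.mul_mem hc (hNC this)
      rcases chief_of_rep hkn hNn hNC hr0 hi (M.comap (QuotientGroup.mk' N)) inferInstance (by
        intro n hn
        rw [Subgroup.mem_comap, QuotientGroup.mk'_apply, (QuotientGroup.eq_one_iff n).2 hn]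
        exact one_mem _) h1 with h | h
      · exfalso
        apply hMb
        rw [← Subgroup.map_comap_eq_self_of_surjective (QuotientGroup.mk'_surjective N) M, h]
        rw [QuotientGroup.map_mk'_self]
      · rw [← Subgroup.map_comap_eq_self_of_surjective (QuotientGroup.mk'_surjective N) M, h]
  have hsoc : socle (G ⧸ N) = f1.range := by
    rw [hf1r]
    apply le_antisymm
    · apply sSup_le
      intro M hM
      have hMn := hM.1
      have hMc : (M.comap (QuotientGroup.mk' N)).Normal := inferInstance
      have hinf : (M ⊓ a.ker.map (QuotientGroup.mk' N)).Normal := inferInstance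
      by_cases hb : M ⊓ a.ker.map (QuotientGroup.mk' N) = ⊥
      · have h1 : M.comap (QuotientGroup.mk' N) ≤ a.ker := by
          apply le_ker_of_inf hr0 hkn hMc
          intro x hx
          have : QuotientGroup.mk' N x ∈ M ⊓ a.ker.map (QuotientGroup.mk' N) :=
            ⟨hx.1, ⟨x, hx.2, rfl⟩⟩
          rw [hb, Subgroup.mem_bot] at this
          exact (QuotientGroup.eq_one_iff _).1 this
        rw [← Subgroup.map_comap_eq_self_of_surjective (QuotientGroup.mk'_surjective N) M]
        exact Subgroup.map_mono h1
      · rw [← hM.2.2 _ hinf hb inf_le_left]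
        exact inf_le_right
    · exact le_sSup hmin
  refine ⟨hNn, fun _ => ?_, fun h => absurd hab h, ?_⟩
  · let F : (V ⋊[QuotientGroup.kerLift a] (G ⧸ a.ker)) →* G ⧸ N :=
      SemidirectProduct.lift f1 f2 (by
        intro h
        obtain ⟨k, rfl⟩ := hps h
        ext v
        have h1 : QuotientGroup.kerLift a (((QuotientGroup.mk' a.ker).comp K.subtype) k) = a k :=
          rfl
        have h2 := hf1e k v
        have h3 : QuotientGroup.mk' N (k : G) =
          f2 (((QuotientGroup.mk' a.ker).comp K.subtype) k) := (hf2 k).symm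
        rw [h3] at h2
        exact h2)
    have hFs : Function.Surjective F := by
      intro x
      obtain ⟨g, rfl⟩ := QuotientGroup.mk'_surjective N x
      obtain ⟨c, hc, k, hk, rfl⟩ := hdec g
      refine ⟨SemidirectProduct.inl (f ⟨c, hc⟩) *
        SemidirectProduct.inr (((QuotientGroup.mk' a.ker).comp K.subtype) ⟨k, hk⟩), ?_⟩
      rw [map_mul]
      simp only [F, SemidirectProduct.lift_inl, SemidirectProduct.lift_inr]
      rw [hf1, hf2]
      rfl
    have hFi : Function.Injective F := by
      rw [injective_iff_map_eq_one]
      intro x hx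
      obtain ⟨c, hc⟩ := hs x.left
      obtain ⟨k, hk'⟩ := hps x.right
      rw [← SemidirectProduct.inl_left_mul_inr_right x, map_mul] at hx
      simp only [F, SemidirectProduct.lift_inl, SemidirectProduct.lift_inr] at hx
      rw [← hc, ← hk', hf1, hf2] at hx
      have h1 : (c : G) * k ∈ N := (QuotientGroup.eq_one_iff _).1 hx
      have h2 : (k : G) ∈ a.ker := by
        have := a.ker.mul_mem (a.ker.inv_mem c.2) (hNC h1)
        simpa using this
      have h3 : (k : G) ∈ N := by rw [← hK2]; exact ⟨k.2, h2⟩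
      have h4 : (c : G) ∈ N := by
        have := N.mul_mem h1 (N.inv_mem h3)
        simpa using this
      apply SemidirectProduct.ext
      · rw [← hc]
        exact (hk c).2 h4
      · rw [← hk']
        exact (QuotientGroup.eq_one_iff _).2 h2
    exact ⟨(MulEquiv.ofBijective F ⟨hFi, hFs⟩).symm⟩
  · apply giso_gequiv
    let e : V ≃* socle (G ⧸ N) :=
      (MonoidHom.ofInjective ((injective_iff_map_eq_one f1).2 hf1i)).trans
        (MulEquiv.subgroupCongr hsoc.symm)
    refine ⟨e.symm, fun g s => ?_⟩
    obtain ⟨v, rfl⟩ := e.surjective s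
    rw [MulEquiv.symm_apply_apply, MulEquiv.symm_apply_eq]
    apply Subtype.ext
    have : ∀ v, ((e v : socle (G ⧸ N)) : G ⧸ N) = f1 v := fun v => rfl
    rw [this, hf1e, ← this]
    rfl

/-- every complemented factor isomorphic to `V` is visible above some crown normal subgroup -/
theorem crown_of_factor [Nontrivial V] (hab : ∀ x y : V, x * y = y * x)
    (hi : Irr a) {X Y : Subgroup G} (hX : X.Normal) (_ : Y.Normal) (hle : Y ≤ X)
    (hr : RepresentsFactor G a X Y) (hc : IsComplementedFactor G X Y) :
    ∃ N ∈ crownNormals a, N ⊓ X ≤ Y := by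
  have hXC := le_ker_self hab hr hX
  have hkn : a.ker.Normal := inferInstance
  obtain ⟨K, hK1, hK2⟩ := hc
  have hdec : ∀ g : G, ∃ c ∈ X, ∃ k ∈ K, c * k = g := by
    intro g
    have : g ∈ X ⊔ K := by rw [sup_comm, hK1]; trivial
    exact Subgroup.mem_sup_of_normal_left.1 this
  have hYN : Y ≤ K ⊓ a.ker := le_inf (hK2 ▸ inf_le_left) (hle.trans hXC)
  have hNn : (K ⊓ a.ker).Normal := by
    constructor
    intro n hn g
    obtain ⟨x, hx, k, hk, rfl⟩ := hdec g
    have h1 : k * n * k⁻¹ ∈ K ⊓ a.ker :=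
      ⟨K.mul_mem (K.mul_mem hk hn.1) (K.inv_mem hk), hkn.conj_mem _ hn.2 k⟩
    have h2 := comm_mem hr hX h1.2 hx
    have h3 := (K ⊓ a.ker).mul_mem ((K ⊓ a.ker).inv_mem (hYN h2)) h1
    convert h3 using 1
    group
  have hCdec : ∀ c ∈ a.ker, ∃ x ∈ X, ∃ n ∈ K ⊓ a.ker, x * n = c := by
    intro c hc
    obtain ⟨x, hx, k, hk, rfl⟩ := hdec c
    refine ⟨x, hx, k, ⟨hk, ?_⟩, rfl⟩
    simpa using a.ker.mul_mem (a.ker.inv_mem (hXC hx)) hc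
  have hinf : K ⊓ a.ker ⊓ X ≤ Y := by
    rw [← hK2]
    exact inf_le_inf_right _ inf_le_left
  refine ⟨K ⊓ a.ker, crown_of_compl hab hi hNn inf_le_right ?_ ⟨K, ?_, rfl⟩, hinf⟩
  · obtain ⟨f, hs, hk, he⟩ := hr
    -- map `c = x n ↦ f x`, obtained from `X → C/N`
    let p : X →* (a.ker ⧸ (K ⊓ a.ker).subgroupOf a.ker) :=
      (QuotientGroup.mk' ((K ⊓ a.ker).subgroupOf a.ker)).comp (Subgroup.inclusion hXC)
    have hp : Function.Surjective p := by
      intro c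
      obtain ⟨c, rfl⟩ := QuotientGroup.mk'_surjective _ c
      obtain ⟨x, hx, n, hn, hxn⟩ := hCdec c c.2
      refine ⟨⟨x, hx⟩, ?_⟩
      refine QuotientGroup.eq.2 ?_
      rw [Subgroup.mem_subgroupOf]
      have : ((Subgroup.inclusion hXC ⟨x, hx⟩)⁻¹ * c : a.ker) = (n : G) := by
        simp [← hxn]
      rw [this]
      exact hn
    obtain ⟨l, hl⟩ := exists_lift p hp f (by
      intro x hx
      have := (QuotientGroup.eq_one_iff _).1 hx
      exact (hk x).2 (hinf ⟨this, x.2⟩))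
    have hval : ∀ (c : a.ker) (x : X) (n : G), n ∈ K ⊓ a.ker → x * n = c →
        l (QuotientGroup.mk' ((K ⊓ a.ker).subgroupOf a.ker) c) = f x := by
      intro c x n hn hxn
      rw [← hl]
      congr 1
      symm
      refine QuotientGroup.eq.2 ?_
      rw [Subgroup.mem_subgroupOf]
      have : ((Subgroup.inclusion hXC x)⁻¹ * c : a.ker) = (n : G) := by
        simp [← hxn]
      rw [this]
      exact hn
    refine ⟨l.comp (QuotientGroup.mk' ((K ⊓ a.ker).subgroupOf a.ker)), ?_, ?_, ?_⟩
    · intro v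
      obtain ⟨x, rfl⟩ := hs v
      exact ⟨Subgroup.inclusion hXC x, hl x⟩
    · intro c
      obtain ⟨x, hx, n, hn, hxn⟩ := hCdec c c.2
      rw [MonoidHom.comp_apply, hval c ⟨x, hx⟩ n hn hxn, hk, ← hxn]
      constructor
      · intro h
        exact Subgroup.mul_mem _ (hYN h) hn
      · intro h
        refine hinf ⟨?_, hx⟩
        simpa using Subgroup.mul_mem _ h (Subgroup.inv_mem _ hn)
    · intro g c d hd
      obtain ⟨x, hx, n, hn, hxn⟩ := hCdec c c.2
      rw [MonoidHom.comp_apply, MonoidHom.comp_apply, hval c ⟨x, hx⟩ n hn hxn,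
        hval d ⟨g * x * g⁻¹, hX.conj_mem _ hx g⟩ (g * n * g⁻¹) (hNn.conj_mem _ hn g)
          (by rw [hd, ← hxn]; simp [mul_assoc])]
      exact he g _ _ rfl
  · rw [eq_top_iff, ← hK1]
    exact sup_le_sup_left hXC K

theorem crownRadical_le {N : Subgroup G} (hN : N ∈ crownNormals a) : crownRadical a ≤ N :=
  sInf_le hN

/-- `I_G(V) = C_G(V)` as soon as there is a crown normal subgroup. -/
theorem crownSocle_eq [Finite G] [Finite V] [Nontrivial V] (hab : ∀ x y : V, x * y = y * x)
    (hi : Irr a) {N : Subgroup G} (hN : N ∈ crownNormals a) : crownSocle a = a.ker := by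
  have hkn : a.ker.Normal := inferInstance
  have hRn : (crownRadical a).Normal := inferInstance
  have hRC : crownRadical a ≤ a.ker := (crownRadical_le hN).trans (crown_props hab hi hN).2.1
  have hIn : (crownSocle a).Normal := by
    rw [crownSocle]; infer_instance
  have hRI : crownRadical a ≤ crownSocle a := by
    intro n hn
    rw [crownSocle, Subgroup.mem_comap, QuotientGroup.mk'_apply, (QuotientGroup.eq_one_iff n).2 hn]
    exact one_mem _
  have hIC : crownSocle a ≤ a.ker := by
    have hcm : (a.ker.map (QuotientGroup.mk' (crownRadical a))).Normal :=
      hkn.map _ (QuotientGroup.mk'_surjective _)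
    have : socle (G ⧸ crownRadical a) ≤ a.ker.map (QuotientGroup.mk' (crownRadical a)) := by
      apply sSup_le
      intro M hM
      have hMn := hM.1
      have hMc : (M.comap (QuotientGroup.mk' (crownRadical a))).Normal := inferInstance
      have hinf : (M ⊓ a.ker.map (QuotientGroup.mk' (crownRadical a))).Normal := inferInstance
      by_cases hb : M ⊓ a.ker.map (QuotientGroup.mk' (crownRadical a)) = ⊥
      · have h1 : M.comap (QuotientGroup.mk' (crownRadical a)) ≤ a.ker := by
          apply le_ker_of_inf (crown_props hab hi hN).2.2.1 hkn hMc
          intro x hx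
          have : QuotientGroup.mk' (crownRadical a) x ∈
              M ⊓ a.ker.map (QuotientGroup.mk' (crownRadical a)) :=
            ⟨hx.1, ⟨x, hx.2, rfl⟩⟩
          rw [hb, Subgroup.mem_bot] at this
          exact crownRadical_le hN ((QuotientGroup.eq_one_iff _).1 this)
        rw [← Subgroup.map_comap_eq_self_of_surjective (QuotientGroup.mk'_surjective _) M]
        exact Subgroup.map_mono h1
      · rw [← hM.2.2 _ hinf hb inf_le_left]
        exact inf_le_right
    intro x hx
    obtain ⟨c, hc, hcx⟩ := this hx
    have : c⁻¹ * x ∈ crownRadical a := QuotientGroup.eq.1 hcx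
    simpa using a.ker.mul_mem hc (hRC this)
  apply le_antisymm hIC
  obtain ⟨T, hT⟩ := (Set.toFinite {T : Subgroup G | T.Normal ∧ crownRadical a ≤ T ∧ T ≤ a.ker ∧
    a.ker ≤ crownSocle a ⊔ T}).exists_minimal ⟨a.ker, hkn, hRC, le_rfl, le_sup_right⟩
  obtain ⟨⟨hTn, hRT, hTC, hIT⟩, hTmin⟩ := hT
  have hIT' : crownSocle a ⊓ T ≤ crownRadical a := by
    rw [crownRadical]
    refine le_sInf fun M hM => ?_
    by_contra hcon
    obtain ⟨hMn, hMC, hMr, -⟩ := crown_props hab hi hM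
    have hsupn : ((crownSocle a ⊓ T) ⊔ M).Normal := inferInstance
    have h1 : (crownSocle a ⊓ T) ⊔ M = a.ker := by
      rcases chief_of_rep hkn hMn hMC hMr hi _ hsupn le_sup_right
        (sup_le (inf_le_left.trans hIC) hMC) with h | h
      · exact absurd (le_sup_left.trans h.le) hcon
      · exact h
    have hTM : (T ⊓ M).Normal := inferInstance
    have h2 := hTmin (y := T ⊓ M) ⟨hTM, le_inf hRT (crownRadical_le hM), inf_le_left.trans hTC, ?_⟩
      inf_le_left
    · exact hcon (inf_le_right.trans (h2.trans inf_le_right))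
    · refine hIT.trans (sup_le le_sup_left ?_)
      intro t ht
      have : t ∈ (crownSocle a ⊓ T) ⊔ M := by rw [h1]; exact hTC ht
      obtain ⟨l, hl, m, hm, rfl⟩ := Subgroup.mem_sup_of_normal_right.1 this
      refine Subgroup.mul_mem_sup hl.1 ⟨?_, hm⟩
      simpa using T.mul_mem (T.inv_mem hl.2) ht
  suffices hTR : T ≤ crownRadical a from
    hIT.trans (sup_le le_rfl (hTR.trans hRI))
  by_contra hcon
  have hTb : T.map (QuotientGroup.mk' (crownRadical a)) ≠ ⊥ := by
    intro h
    apply hcon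
    intro t ht
    have : QuotientGroup.mk' (crownRadical a) t ∈ T.map (QuotientGroup.mk' (crownRadical a)) :=
      ⟨t, ht, rfl⟩
    rw [h, Subgroup.mem_bot] at this
    exact (QuotientGroup.eq_one_iff _).1 this
  obtain ⟨M, hM⟩ := (Set.toFinite {M : Subgroup (G ⧸ crownRadical a) | M.Normal ∧ M ≠ ⊥ ∧
    M ≤ T.map (QuotientGroup.mk' (crownRadical a))}).exists_minimal
    ⟨_, hTn.map _ (QuotientGroup.mk'_surjective _), hTb, le_rfl⟩
  obtain ⟨⟨hMn, hMb, hMT⟩, hMmin⟩ := hM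
  have hMs : M ≤ socle (G ⧸ crownRadical a) := by
    refine le_sSup ⟨hMn, hMb, fun L hL hLb hLM => le_antisymm hLM ?_⟩
    exact hMmin (y := L) ⟨hL, hLb, hLM.trans hMT⟩ hLM
  apply hMb
  rw [eq_bot_iff]
  intro x hx
  obtain ⟨t, ht, rfl⟩ := hMT hx
  rw [Subgroup.mem_bot]
  exact (QuotientGroup.eq_one_iff _).2 (hIT' ⟨hMs hx, ht⟩)

theorem card_sup_mul_card_inf [Finite G] (X R : Subgroup G) [R.Normal] :
    Nat.card (X ⊔ R : Subgroup G) * Nat.card (X ⊓ R : Subgroup G) = Nat.card X * Nat.card R := by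
  have h1 := Subgroup.relIndex_sup_right X R
  have h2 := Subgroup.relIndex_mul_relIndex ⊥ R (X ⊔ R) bot_le le_sup_right
  have h3 := Subgroup.relIndex_mul_relIndex ⊥ (X ⊓ R) X bot_le inf_le_left
  rw [Subgroup.inf_relIndex_left] at h3
  simp only [Subgroup.relIndex_bot_left] at h2 h3
  rw [← h2, ← h3, h1]
  ring

end Structural2

section Counting

variable {G : Type*} [Group G] {V : Type*} [Group V] {a : G →* MulAut V}

theorem ser_normal (S : ChiefSeries G) (i : Fin (S.len + 1)) : (S.ser i).Normal := by
  induction i using Fin.cases with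
  | zero => rw [S.bot_eq]; infer_instance
  | succ i => exact (S.chief i).1

theorem delta_le [Finite G] [Finite V] [Nontrivial V] (hab : ∀ x y : V, x * y = y * x)
    (hi : Irr a) {N : Subgroup G} (hN : N ∈ crownNormals a) (S : ChiefSeries G) :
    Nat.card V ^ deltaIso a S * Nat.card (crownRadical a) ≤ Nat.card a.ker := by
  classical
  have hRn : (crownRadical a).Normal := inferInstance
  have hRC : crownRadical a ≤ a.ker := (crownRadical_le hN).trans (crown_props hab hi hN).2.1
  let sp : Fin S.len → Prop := fun i =>
    IsComplementedFactor G (S.ser i.succ) (S.ser i.castSucc) ∧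
    RepresentsFactor G a (S.ser i.succ) (S.ser i.castSucc)
  have key : ∀ j : Fin (S.len + 1),
      Nat.card V ^ (Finset.univ.filter fun i : Fin S.len => sp i ∧ i.castSucc < j).card *
        Nat.card (crownRadical a) ≤
      Nat.card ((S.ser j ⊓ a.ker) ⊔ crownRadical a : Subgroup G) := by
    intro j
    induction j using Fin.induction with
    | zero =>
      simp
      exact Nat.card_le_card_of_injective (Subgroup.inclusion le_sup_right)
        (Subgroup.inclusion_injective _)
    | succ j ih =>
      obtain ⟨hXn, hYn, hlt, -⟩ := S.chief j
      by_cases hj : sp j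
      · have h1 : (Finset.univ.filter fun i : Fin S.len => sp i ∧ i.castSucc < j.succ) =
            insert j (Finset.univ.filter fun i : Fin S.len => sp i ∧ i.castSucc < j.castSucc) := by
          ext i
          simp only [Finset.mem_filter, Finset.mem_univ, true_and, Finset.mem_insert,
            Fin.castSucc_lt_succ_iff, Fin.castSucc_lt_castSucc_iff, le_iff_eq_or_lt]
          constructor
          · rintro ⟨h, h' | h'⟩
            · exact Or.inl h'
            · exact Or.inr ⟨h, h'⟩
          · rintro (rfl | h)
            · exact ⟨hj, Or.inl rfl⟩
            · exact ⟨h.1, Or.inr h.2⟩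
        rw [h1, Finset.card_insert_of_notMem (by simp), pow_succ, mul_comm (_ ^ _) (Nat.card V),
          mul_assoc]
        refine (Nat.mul_le_mul_left _ ih).trans ?_
        have hXC := le_ker_self hab hj.2 hXn
        rw [inf_eq_left.2 hXC, inf_eq_left.2 (hlt.le.trans hXC)]
        obtain ⟨M, hM, hMX⟩ := crown_of_factor hab hi hXn hYn hlt.le hj.2 hj.1
        have e1 := card_sup_mul_card_inf (S.ser j.succ) (crownRadical a)
        have e2 := card_sup_mul_card_inf (S.ser j.castSucc) (crownRadical a)
        have e3 := card_of_rep hlt.le hj.2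
        have e4 : S.ser j.succ ⊓ crownRadical a = S.ser j.castSucc ⊓ crownRadical a := by
          apply le_antisymm
          · refine le_inf ?_ inf_le_right
            refine le_trans ?_ hMX
            exact le_inf (inf_le_right.trans (crownRadical_le hM)) inf_le_left
          · exact inf_le_inf_right _ hlt.le
        rw [e4, e3, mul_assoc, ← e2, ← mul_assoc] at e1
        exact (Nat.eq_of_mul_eq_mul_right Nat.card_pos e1).ge
      · have h1 : (Finset.univ.filter fun i : Fin S.len => sp i ∧ i.castSucc < j.succ) =
            (Finset.univ.filter fun i : Fin S.len => sp i ∧ i.castSucc < j.castSucc) := by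
          ext i
          simp only [Finset.mem_filter, Finset.mem_univ, true_and,
            Fin.castSucc_lt_succ_iff, Fin.castSucc_lt_castSucc_iff, le_iff_eq_or_lt]
          constructor
          · rintro ⟨h, rfl | h'⟩
            · exact absurd h hj
            · exact ⟨h, h'⟩
          · rintro h
            exact ⟨h.1, Or.inr h.2⟩
        rw [h1]
        refine ih.trans ?_
        have hle : (S.ser j.castSucc ⊓ a.ker) ⊔ crownRadical a ≤
            (S.ser j.succ ⊓ a.ker) ⊔ crownRadical a :=
          sup_le_sup_right (inf_le_inf_right _ hlt.le) _
        exact Nat.card_le_card_of_injective (Subgroup.inclusion hle)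
          (Subgroup.inclusion_injective _)
  have h := key (Fin.last S.len)
  rw [S.top_eq, top_inf_eq, sup_eq_left.2 hRC] at h
  have h2 : deltaIso a S =
      (Finset.univ.filter fun i : Fin S.len => sp i ∧ i.castSucc < Fin.last S.len).card := by
    rw [deltaIso, Nat.card_eq_fintype_card, Fintype.card_subtype]
    congr 1
    ext i
    simp [sp, Fin.castSucc_lt_last]
  rw [h2]
  exact h

theorem delta_pos [Finite G] [Finite V] [Nontrivial V] (hab : ∀ x y : V, x * y = y * x)
    (hi : Irr a) {N : Subgroup G} (hN : N ∈ crownNormals a) (S : ChiefSeries G) :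
    0 < deltaIso a S := by
  obtain ⟨hNn, hNC, hr, K, hK1, hK2⟩ := crown_props hab hi hN
  have hkn : a.ker.Normal := inferInstance
  have hex : ∃ j : Fin S.len, S.ser j.castSucc ⊓ a.ker ≤ N ∧ ¬ S.ser j.succ ⊓ a.ker ≤ N := by
    by_contra hcon
    push Not at hcon
    have key : ∀ j : Fin (S.len + 1), S.ser j ⊓ a.ker ≤ N := by
      intro j
      induction j using Fin.induction with
      | zero => rw [S.bot_eq]; simp
      | succ j ih => exact hcon j ih
    have h := key (Fin.last S.len)
    rw [S.top_eq, top_inf_eq] at h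
    have h1 := card_of_rep hNC hr
    rw [le_antisymm hNC h] at h1
    have h2 : 1 < Nat.card V := Finite.one_lt_card
    have h3 : 0 < Nat.card a.ker := Nat.card_pos
    nlinarith
  obtain ⟨j, hj1, hj2⟩ := hex
  obtain ⟨hXn, hYn, hlt, hmin⟩ := S.chief j
  set X := S.ser j.succ with hX
  set Y := S.ser j.castSucc with hY
  have hYC : Y ≤ a.ker := le_ker_of_inf hr hkn hYn hj1
  have hYN : Y ≤ N := by rwa [inf_eq_left.2 hYC] at hj1
  have hXC : X ≤ a.ker := by
    have hn : (X ⊓ a.ker ).Normal := inferInstance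
    rcases hmin (X ⊓ a.ker) hn (le_inf hlt.le hYC) inf_le_left with h | h
    · exact absurd (h.le.trans hYN) hj2
    · exact inf_eq_left.1 h
  rw [inf_eq_left.2 hXC] at hj2
  have hXN : X ⊓ N = Y := by
    have hn : (X ⊓ N).Normal := inferInstance
    rcases hmin (X ⊓ N) hn (le_inf hlt.le hYN) inf_le_left with h | h
    · exact h
    · exact absurd (inf_eq_left.1 h) hj2
  have hsup : X ⊔ N = a.ker := by
    have hn : (X ⊔ N).Normal := inferInstance
    rcases chief_of_rep hkn hNn hNC hr hi (X ⊔ N) hn le_sup_right (sup_le hXC hNC) with h | h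
    · exact absurd (le_sup_left.trans h.le) hj2
    · exact h
  have hsp : IsComplementedFactor G X Y ∧ RepresentsFactor G a X Y := by
    constructor
    · refine ⟨K, ?_, ?_⟩
      · rw [eq_top_iff, ← hK1, ← hsup]
        refine sup_le le_sup_left (sup_le le_sup_right ?_)
        rw [← hK2]
        exact inf_le_left.trans le_sup_left
      · rw [← hXN, ← hK2]
        apply le_antisymm
        · exact le_inf inf_le_right (le_inf inf_le_left (inf_le_right.trans hXC))
        · exact le_inf (inf_le_right.trans inf_le_left) inf_le_left
    · obtain ⟨f, hs, hk, he⟩ := hr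
      refine ⟨f.comp (Subgroup.inclusion hXC), ?_, ?_, ?_⟩
      · intro v
        obtain ⟨c, rfl⟩ := hs v
        have hc : (c : G) ∈ X ⊔ N := by rw [hsup]; exact c.2
        obtain ⟨x, hx, n, hn, hxn⟩ := Subgroup.mem_sup_of_normal_right.1 hc
        refine ⟨⟨x, hx⟩, ?_⟩
        have h1 : c = Subgroup.inclusion hXC ⟨x, hx⟩ * ⟨n, hNC hn⟩ := by
          apply Subtype.ext
          simp [hxn]
        rw [h1, map_mul, (hk ⟨n, hNC hn⟩).2 hn, mul_one]
        rfl
      · intro x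
        rw [MonoidHom.comp_apply, hk, ← hXN]
        simp
      · intro g x y hxy
        exact he g _ _ hxy
  rw [deltaIso]
  have : Nonempty {i : Fin S.len //
    IsComplementedFactor G (S.ser i.succ) (S.ser i.castSucc) ∧
    RepresentsFactor G a (S.ser i.succ) (S.ser i.castSucc)} := ⟨⟨j, hsp⟩⟩
  exact Nat.card_pos

end Counting

section ModuleFacts

theorem endCard_pow {G : Type*} [Group G] {V : Type*} [Group V] [Finite V]
    [Nontrivial V] (hab : ∀ x y : V, x * y = y * x) {a : G →* MulAut V} (hi : Irr a) :
    2 ≤ endCard G a ∧ endCard G a ^ dimEnd G a = Nat.card V := by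
  let : CommGroup V := { ‹Group V› with mul_comm := hab }
  let T : Set (AddMonoid.End (Additive V)) :=
    Set.range fun g : G => (MonoidHom.toAdditive (a g).toMonoidHom : Additive V →+ Additive V)
  let E : Subring (AddMonoid.End (Additive V)) := Subring.centralizer T
  have hE : ∀ f : AddMonoid.End (Additive V), f ∈ E ↔
      ∀ (g : G) (v : V), f (Additive.ofMul (a g v)) =
        Additive.ofMul (a g (f (Additive.ofMul v)).toMul) := by
    intro f
    simp only [E, Subring.mem_centralizer_iff, T]
    constructor
    · intro h g v
      exact (DFunLike.congr_fun (h _ ⟨g, rfl⟩) (Additive.ofMul v)).symm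
    · rintro h _ ⟨g, rfl⟩
      apply AddMonoidHom.ext
      intro v
      exact (h g v.toMul).symm
  have hunit : ∀ x : E, IsUnit x ∨ x = 0 := by
    intro x
    by_cases hx : x = 0
    · exact Or.inr hx
    left
    have hxE := (hE x).1 x.2
    let W : Subgroup V := AddSubgroup.toSubgroup' (x : AddMonoid.End (Additive V)).ker
    have hW : ∀ v : V, v ∈ W ↔ (x : AddMonoid.End (Additive V)) (Additive.ofMul v) = 0 :=
      fun v => Iff.rfl
    have hinj : Function.Injective (x : AddMonoid.End (Additive V)) := by
      rcases hi W (by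
        intro g v hv
        rw [hW] at hv ⊢
        rw [hxE, hv]
        simp) with h | h
      · rw [injective_iff_map_eq_zero]
        intro v hv
        have : v.toMul ∈ W := hv
        rw [h, Subgroup.mem_bot] at this
        exact this
      · exfalso
        apply hx
        apply Subtype.ext
        ext v
        have : v.toMul ∈ W := by rw [h]; trivial
        exact this
    have hbij : Function.Bijective (x : AddMonoid.End (Additive V)) :=
      Finite.injective_iff_bijective.1 hinj
    let e : Additive V ≃+ Additive V :=
      AddEquiv.ofBijective (x : AddMonoid.End (Additive V)) hbij
    have he : ∀ v, e v = (x : AddMonoid.End (Additive V)) v := fun v => rfl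
    let es : AddMonoid.End (Additive V) := e.symm.toAddMonoidHom
    have hes : es ∈ E := by
      rw [hE]
      intro g v
      change e.symm _ = Additive.ofMul (a g (e.symm (Additive.ofMul v)).toMul)
      rw [AddEquiv.symm_apply_eq, he, hxE]
      have := e.apply_symm_apply (Additive.ofMul v)
      rw [he] at this
      simp [this]
    refine ⟨⟨x, ⟨_, hes⟩, ?_, ?_⟩, rfl⟩
    · apply Subtype.ext
      ext v
      exact e.apply_symm_apply v
    · apply Subtype.ext
      ext v
      exact e.symm_apply_apply v
  have hfinE : Finite (AddMonoid.End (Additive V)) :=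
    Finite.of_injective (fun f : AddMonoid.End (Additive V) => (f : Additive V → Additive V))
      DFunLike.coe_injective
  have hntE : Nontrivial E := by
    refine ⟨⟨0, 1, fun h => ?_⟩⟩
    obtain ⟨v, hv⟩ := exists_ne (1 : V)
    apply hv
    have := congrArg (fun y : E => (y : AddMonoid.End (Additive V)) (Additive.ofMul v)) h
    exact this.symm
  have heq : EquivEnd G a ≃ E :=
    { toFun := fun f => ⟨(MonoidHom.toAdditive f.1 : Additive V →+ Additive V),
        (hE _).2 fun g v => congrArg Additive.ofMul (f.2 g v)⟩
      invFun := fun x => ⟨MonoidHom.toAdditive.symm (x : AddMonoid.End (Additive V)),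
        fun g v => congrArg Additive.toMul ((hE x).1 x.2 g v)⟩
      left_inv := fun f => by
        apply Subtype.ext
        ext v
        rfl
      right_inv := fun x => by
        apply Subtype.ext
        ext v
        rfl }
  have hcard : endCard G a = Nat.card E := Nat.card_congr heq
  have hpow : ∃ n, Nat.card E ^ n = Nat.card V := by
    let : DivisionRing E := DivisionRing.ofIsUnitOrEqZero hunit
    have : Fintype E := Fintype.ofFinite E
    have : Fintype (Additive V) := Fintype.ofFinite _
    refine ⟨Module.finrank E (Additive V), ?_⟩
    have := Module.card_eq_pow_finrank (K := E) (V := Additive V)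
    rw [Nat.card_eq_fintype_card, ← this, ← Nat.card_eq_fintype_card]
    exact Nat.card_congr Additive.toMul
  rw [hcard]
  refine ⟨Finite.one_lt_card, ?_⟩
  have := Nat.sInf_mem (s := {n : ℕ | endCard G a ^ n = Nat.card V}) (by
    rw [hcard]; exact hpow)
  rw [← hcard]
  exact this

theorem h1Dim_zero {H : Type*} [Group H] [Finite H] {V : Type*} [Group V] [Finite V]
    [Nontrivial V] (hab : ∀ x y : V, x * y = y * x) {b : H →* MulAut V} (hi : Irr b)
    (hb : Function.Injective b) (hH : Nontrivial H) : h1Dim H b = 0 := by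
  obtain ⟨h0, hh0⟩ := exists_ne (1 : H)
  have hcomm := hab
  -- fixed points of a commuting element
  have hfixall : ∀ v : V, (∀ h, b h v = v) → v = 1 := by
    let W : Subgroup V :=
      { carrier := {v | ∀ h, b h v = v}
        mul_mem' := fun {x y} hx hy h => by rw [map_mul, hx, hy]
        one_mem' := fun h => map_one _
        inv_mem' := fun {x} hx h => by rw [map_inv, hx] }
    intro v hv
    rcases hi W (fun g v hv h => by rw [hv g, hv h]) with h | h
    · have : v ∈ W := hv
      rwa [h, Subgroup.mem_bot] at this
    · exfalso
      apply hh0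
      apply hb
      rw [map_one]
      ext w
      have : w ∈ W := by rw [h]; trivial
      exact this h0
  have hIder : Nat.card V ≤ Nat.card (IderSet H b) := by
    refine Nat.card_le_card_of_injective
      (fun v => (⟨fun h => b h v * v⁻¹, v, fun h => rfl⟩ : IderSet H b)) ?_
    intro v w hvw
    have h1 : ∀ h, b h v * v⁻¹ = b h w * w⁻¹ := fun h =>
      congrFun (congrArg Subtype.val hvw) h
    have h2 := hfixall (v * w⁻¹) (by
      intro h
      have h3 := h1 h
      rw [mul_inv_eq_iff_eq_mul] at h3
      rw [map_mul, map_inv, h3, hab (b h w * w⁻¹) v, ← mul_assoc, hab _ (b h w)⁻¹]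
      rw [← mul_assoc, ← mul_assoc, hab _ v]
      simp)
    exact mul_inv_eq_one.1 h2
  have hDer : Nat.card (DerSet H b) ≤ Nat.card V := by
    -- the `H'`-fixed points
    let W : Subgroup V :=
      { carrier := {v | ∀ h k, b (h * k) v = b (k * h) v}
        mul_mem' := fun {x y} hx hy h k => by rw [map_mul, map_mul (b (k * h)), hx, hy]
        one_mem' := fun h k => by rw [map_one, map_one]
        inv_mem' := fun {x} hx h k => by rw [map_inv, map_inv, hx] }
    have hWm : ∀ v, v ∈ W ↔ ∀ h k, b (h * k) v = b (k * h) v := fun v => Iff.rfl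
    have hζW : ∀ ζ ∈ DerSet H b, ∀ h, ζ h ∈ W := by
      intro ζ hζ x h k
      have e1 := hζ (x * k) h
      have e2 := hζ x (k * h)
      rw [mul_assoc, e2, hζ x k, hζ k h, map_mul (b h), ← mul_assoc, mul_left_inj, mul_left_inj] at e1
      rw [e1, map_mul b, MulAut.mul_apply]
    rcases hi W (by
      intro g v hv
      rw [hWm] at hv ⊢
      intro h k
      have e1 : b (h * k * g) v = b (k * h * g) v := by
        rw [mul_assoc, hv, mul_assoc, mul_assoc, map_mul, MulAut.mul_apply, hv g h,
          ← MulAut.mul_apply, ← map_mul]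
      rw [map_mul b (h * k), map_mul b (k * h)] at e1
      exact e1) with hW | hW
    · refine Nat.card_le_card_of_injective (fun _ => (1 : V)) ?_
      intro ζ ξ _
      apply Subtype.ext
      funext h
      have e1 := hζW ζ ζ.2 h
      have e2 := hζW ξ ξ.2 h
      rw [hW, Subgroup.mem_bot] at e1 e2
      rw [e1, e2]
    · have hHc : ∀ h k : H, h * k = k * h := by
        intro h k
        apply hb
        ext v
        have : v ∈ W := by rw [hW]; trivial
        exact this h k
      -- fixed points of `h0`
      let F : Subgroup V :=
        { carrier := {v | b h0 v = v}
          mul_mem' := fun {x y} hx hy => by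
            change b h0 (x * y) = x * y
            rw [map_mul, hx, hy]
          one_mem' := map_one _
          inv_mem' := fun {x} hx => by
            change b h0 x⁻¹ = x⁻¹
            rw [map_inv, hx] }
      have hF : ∀ v, b h0 v = v → v = 1 := by
        intro v hv
        rcases hi F (by
          intro g v hv
          change b h0 (b g v) = b g v
          have hv : b h0 v = v := hv
          rw [← MulAut.mul_apply, ← map_mul, hHc, map_mul, MulAut.mul_apply, hv]) with h | h
        · have : v ∈ F := hv
          rwa [h, Subgroup.mem_bot] at this
        · exfalso
          apply hh0
          apply hb
          rw [map_one]
          ext w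
          have : w ∈ F := by rw [h]; trivial
          exact this
      refine Nat.card_le_card_of_injective (fun ζ : DerSet H b => ζ.1 h0) ?_
      intro ζ ξ hζξ
      have hζξ : ζ.1 h0 = ξ.1 h0 := hζξ
      apply Subtype.ext
      funext h
      have key : ∀ η ∈ DerSet H b, b h0 (η h) * (η h)⁻¹ = b h (η h0) * (η h0)⁻¹ := by
        intro η hη
        have e1 := hη h h0
        rw [hHc, hη h0 h] at e1
        rw [mul_inv_eq_iff_eq_mul, mul_assoc, hab (η h0)⁻¹, ← mul_assoc, e1]
        simp
      have e1 := key ζ ζ.2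
      rw [hζξ, ← key ξ ξ.2, mul_inv_eq_iff_eq_mul] at e1
      have e2 := hF (ζ.1 h * (ξ.1 h)⁻¹) (by
        rw [map_mul, map_inv, e1, hab (b h0 (ξ.1 h) * _) (ζ.1 h), ← mul_assoc, hab _ (b h0 (ξ.1 h))⁻¹,
          ← mul_assoc, ← mul_assoc, hab _ (ζ.1 h)]
        simp)
      exact mul_inv_eq_one.1 e2
  have hend : 0 < endCard H b := by
    have : Nonempty (EquivEnd H b) := ⟨⟨1, fun h v => by simp⟩⟩
    have : Finite (EquivEnd H b) := by
      unfold EquivEnd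
      have : Finite (V →* V) :=
        Finite.of_injective (fun f : V →* V => (f : V → V)) DFunLike.coe_injective
      infer_instance
    exact Nat.card_pos
  rw [h1Dim, Nat.sInf_eq_zero]
  by_cases hle : Nat.card (IderSet H b) = Nat.card (DerSet H b)
  · left
    simpa using hle
  · right
    rw [Set.eq_empty_iff_forall_notMem]
    intro m hm
    have hm : endCard H b ^ m * Nat.card (IderSet H b) = Nat.card (DerSet H b) := hm
    have : 1 ≤ endCard H b ^ m := Nat.one_le_pow _ _ hend
    have : Nat.card (IderSet H b) ≤ endCard H b ^ m * Nat.card (IderSet H b) :=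
      Nat.le_mul_of_pos_left _ this
    omega

theorem card_le_factorial {H : Type*} [Group H] [Finite H] {V : Type*} [Group V] [Finite V]
    {b : H →* MulAut V} (hb : Function.Injective b) :
    Nat.card H ≤ (Nat.card V - 1).factorial := by
  classical
  have := Fintype.ofFinite V
  have h1 : Nat.card {v : V // v ≠ 1} = Nat.card V - 1 := by
    rw [Nat.card_eq_fintype_card, Nat.card_eq_fintype_card, Fintype.card_subtype_compl]
    simp
  rw [← h1, ← Nat.card_perm]
  refine Nat.card_le_card_of_injective (fun h =>
    ((b h).toEquiv.subtypeEquiv (by intro v; simp) : Equiv.Perm {v : V // v ≠ 1})) ?_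
  intro h k hhk
  apply hb
  ext v
  by_cases hv : v = 1
  · subst hv; simp
  · have := congrArg (fun e : Equiv.Perm {v : V // v ≠ 1} => ((e ⟨v, hv⟩ : {v : V // v ≠ 1}) : V)) hhk
    simpa using this

theorem card_ne_one {V : Type*} [Group V] [Finite V] :
    Nat.card {v : V // v ≠ 1} = Nat.card V - 1 := by
  classical
  have := Fintype.ofFinite V
  rw [Nat.card_eq_fintype_card, Nat.card_eq_fintype_card, Fintype.card_subtype_compl]
  simp

theorem card_fix_mul {H : Type*} [Group H] [Finite H] {V : Type*} [Group V] [Finite V]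
    [Nontrivial V] (b : H →* MulAut V) :
    Nat.card H ≤ Nat.card {h : H // ∃ v : V, v ≠ 1 ∧ b h v = v} * (Nat.card V - 1) := by
  obtain ⟨v, hv⟩ := exists_ne (1 : V)
  have hne : ∀ h, b h v ≠ 1 := by
    intro h; simpa using hv
  rw [← card_ne_one, ← Nat.card_prod]
  let σ : V → H := Function.invFun (fun h => b h v)
  have hσ : ∀ h, b (σ (b h v)) v = b h v := fun h =>
    Function.invFun_eq (f := fun h => b h v) ⟨h, rfl⟩
  refine Nat.card_le_card_of_injective (fun h => (⟨(σ (b h v))⁻¹ * h, v, hv, ?_⟩, ⟨b h v, hne h⟩)) ?_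
  · rw [map_mul, MulAut.mul_apply, ← hσ h, ← MulAut.mul_apply, ← map_mul, hσ h]
    simp
  · intro h k hhk
    simp only [Prod.mk.injEq, Subtype.mk.injEq] at hhk
    have := hhk.1
    rw [hhk.2] at this
    exact mul_left_cancel this

theorem four_le_fix {H : Type*} [Group H] [Finite H] {V : Type*} [Group V] [Finite V]
    [Nontrivial V] {b : H →* MulAut V} (hb : Function.Injective b)
    (hcard : Nat.card V ≤ Nat.card H) :
    4 ≤ Nat.card {h : H // ∃ v : V, v ≠ 1 ∧ b h v = v} := by
  classical
  have hstab : ∀ v : V, v ≠ 1 → ∃ h : H, h ≠ 1 ∧ b h v = v := by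
    intro v hv
    by_contra hcon
    push Not at hcon
    have hne : ∀ h, b h v ≠ 1 := by
      intro h; simpa using hv
    have := Nat.card_le_card_of_injective (fun h => (⟨b h v, hne h⟩ : {v : V // v ≠ 1})) (by
      intro h k hhk
      simp only [Subtype.mk.injEq] at hhk
      by_contra hne
      apply hcon (k⁻¹ * h)
      · intro h1
        exact hne (inv_mul_eq_one.1 h1).symm
      · rw [map_mul, MulAut.mul_apply, hhk]
        simp)
    rw [card_ne_one] at this
    have : 0 < Nat.card V := Nat.card_pos
    omega
  have hmove : ∀ h : H, h ≠ 1 → ∃ v, b h v ≠ v := by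
    intro h hh
    by_contra hcon
    push Not at hcon
    apply hh
    apply hb
    rw [map_one]
    ext v
    exact hcon v
  have hone : ∀ (h : H) (v : V), b h v ≠ v → v ≠ 1 := by
    rintro h v hv rfl
    simp at hv
  obtain ⟨v1, hv1⟩ := exists_ne (1 : V)
  obtain ⟨x, hx, hxv⟩ := hstab v1 hv1
  obtain ⟨v2, hv2⟩ := hmove x hx
  obtain ⟨y, hy, hyv⟩ := hstab v2 (hone _ _ hv2)
  have hv3 : ∃ v3, b x v3 ≠ v3 ∧ b y v3 ≠ v3 := by
    obtain ⟨w, hw⟩ := hmove y hy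
    by_cases hxw : b x w = w
    · refine ⟨v2 * w, ?_, ?_⟩
      · rw [map_mul, hxw]
        simpa using hv2
      · rw [map_mul, hyv]
        simpa using hw
    · exact ⟨w, hxw, hw⟩
  obtain ⟨v3, hv3x, hv3y⟩ := hv3
  obtain ⟨z, hz, hzv⟩ := hstab v3 (hone _ _ hv3x)
  have hxy : x ≠ y := by rintro rfl; exact hv2 hyv
  have hxz : x ≠ z := by rintro rfl; exact hv3x hzv
  have hyz : y ≠ z := by rintro rfl; exact hv3y hzv
  have hsub : ((({1, x, y, z} : Finset H) : Set H)) ⊆ {h : H | ∃ v : V, v ≠ 1 ∧ b h v = v} := by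
    intro t ht
    simp at ht
    rcases ht with rfl | rfl | rfl | rfl
    · exact ⟨v1, hv1, by simp⟩
    · exact ⟨v1, hv1, hxv⟩
    · exact ⟨v2, hone _ _ hv2, hyv⟩
    · exact ⟨v3, hone _ _ hv3x, hzv⟩
  have h1 := Set.ncard_le_ncard hsub (Set.toFinite _)
  rw [Set.ncard_coe_finset] at h1
  have h2 : ({1, x, y, z} : Finset H).card = 4 := by
    rw [Finset.card_insert_of_notMem, Finset.card_insert_of_notMem,
      Finset.card_insert_of_notMem, Finset.card_singleton]
    · simpa using hyz
    · simp [hxy, hxz]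
    · simp [hx.symm, hy.symm, hz.symm]
  rw [h2] at h1
  exact h1

end ModuleFacts

section Numeric

theorem num_sq {E D h r B : ℝ} (hE : 0 ≤ E) (hD : 0 ≤ D) (hh : 0 < h) (hr : 0 ≤ r) (hB : h ≤ B)
    (H : E ^ 2 * B < D ^ 2 * r) : E * h < D * Real.sqrt (h * r) := by
  apply lt_of_pow_lt_pow_left₀ 2 (by positivity)
  rw [mul_pow, mul_pow, Real.sq_sqrt (by positivity)]
  have h1 : E ^ 2 * h ≤ E ^ 2 * B := by gcongr
  nlinarith

theorem num_I_large {s t : ℝ} (hs : 3 ≤ s ^ 2) (hs0 : 0 ≤ s) (ht0 : 0 ≤ t) (ht : t ^ 2 = s ^ 2 - 1)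
    (d : ℕ) (hd : 3 ≤ d) : ((d : ℝ) + 3 / 2) * t < 5 / 3 * (s ^ d - 1) := by
  have hs1 : (1.73 : ℝ) ≤ s := by nlinarith
  have hts : t ≤ s := by nlinarith
  induction d, hd using Nat.le_induction with
  | base =>
    have h3 : 3 * s ≤ s ^ 3 := by nlinarith
    apply lt_of_pow_lt_pow_left₀ 2 (by push_cast; nlinarith)
    rw [mul_pow, ht]
    push_cast
    have e1 : s ^ 3 = s ^ 2 * s := by ring
    have e2 : (s ^ 3 - 1) ^ 2 = (s ^ 2) ^ 3 - 2 * (s ^ 2 * s) + 1 := by ring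
    rw [mul_pow, e2]
    have h4 : s ≤ (s ^ 2 + 3) / 3.46 := by
      rw [le_div_iff₀ (by norm_num)]
      nlinarith [sq_nonneg (s - 1.74)]
    have h5 : s ^ 2 * s ≤ s ^ 2 * ((s ^ 2 + 3) / 3.46) := by gcongr
    generalize s ^ 2 = z at *
    nlinarith [mul_nonneg (sub_nonneg.2 hs) (sub_nonneg.2 hs), mul_nonneg (mul_nonneg (sub_nonneg.2 hs) (sub_nonneg.2 hs)) (sub_nonneg.2 hs)]
  | succ d hd ih =>
    have h1 : s ^ 3 ≤ s ^ d := pow_le_pow_right₀ (by linarith) hd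
    have h2 : 3 * s ≤ s ^ 3 := by nlinarith
    have h3 : s ^ (d + 1) = s ^ d * s := pow_succ _ _
    have h4 : s ^ d * 0.73 ≤ s ^ d * (s - 1) := by
      apply mul_le_mul_of_nonneg_left _ (by positivity)
      linarith
    push_cast
    nlinarith

theorem num_II_large {s x : ℝ} (hs : 2 ≤ s) (hx : s ≤ x)
    (d : ℕ) (hd : 3 ≤ d) : ((d : ℝ) + 2) * (s ^ 2 - 1) < 5 / 3 * (s ^ d - 1) * x := by
  have h0 : (1 : ℝ) ≤ s ^ d := one_le_pow₀ (by linarith)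
  suffices h : ((d : ℝ) + 2) * (s ^ 2 - 1) < 5 / 3 * (s ^ d - 1) * s by
    have : 5 / 3 * (s ^ d - 1) * s ≤ 5 / 3 * (s ^ d - 1) * x := by
      apply mul_le_mul_of_nonneg_left hx
      linarith
    linarith
  clear h0
  induction d, hd using Nat.le_induction with
  | base =>
    push_cast
    have : 0 < (s - 1) * (s ^ 3 + s ^ 2 - 2 * s - 3) := by
      apply mul_pos (by linarith)
      nlinarith [mul_nonneg (sub_nonneg.2 hs) (sub_nonneg.2 hs), sq_nonneg s]
    nlinarith
  | succ d hd ih =>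
    have h1 : s ^ 3 ≤ s ^ d := pow_le_pow_right₀ (by linarith) hd
    have h2 : 4 * s ≤ s ^ 3 := by nlinarith
    have h3 : s ^ (d + 1) = s ^ d * s := pow_succ _ _
    have h4 : s ^ d * 1 ≤ s ^ d * (s - 1) := by
      apply mul_le_mul_of_nonneg_left _ (by positivity)
      linarith
    push_cast
    have h5 : (s ^ (d + 1) - s ^ d) * s ≥ 4 * s * s := by
      apply mul_le_mul_of_nonneg_right _ (by linarith)
      rw [h3]; linarith
    nlinarith

theorem num_I (Q h r d : ℕ) (hQ : 3 ≤ Q) (hh : 0 < h) (hhQ : h < Q) (hr : 0 < r) (hd : 0 < d)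
    (hexc : ¬ ((d = 2 ∧ Q = 4 ∧ r = 1) ∨ (d = 2 ∧ Q = 3 ∧ r ≤ 2) ∨
      (d = 1 ∧ 4 ≤ Q ∧ Q ≤ 7 ∧ r = 1) ∨ (d = 1 ∧ Q = 3 ∧ r ≤ 3))) :
    ((d : ℝ) * (if d = 1 then (0 : ℝ) else 1) + (Q : ℝ) / ((Q : ℝ) - 1)) * (h : ℝ) <
      5 / 3 * (Real.sqrt Q ^ d - 1) * Real.sqrt (h * r) := by
  have hQ' : (3 : ℝ) ≤ Q := by exact_mod_cast hQ
  have hs2 : Real.sqrt Q ^ 2 = Q := Real.sq_sqrt (by linarith)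
  have hs0 := Real.sqrt_nonneg (Q : ℝ)
  set s := Real.sqrt (Q : ℝ) with hs
  have hs1 : (1.73 : ℝ) ≤ s := by nlinarith
  have hsd : (1 : ℝ) ≤ s ^ d := one_le_pow₀ (by linarith)
  have hr1 : (1 : ℝ) ≤ r := by exact_mod_cast hr
  have hh' : (0 : ℝ) < h := by exact_mod_cast hh
  have hhQ' : (h : ℝ) ≤ Q - 1 := by
    have : h + 1 ≤ Q := hhQ
    have : ((h + 1 : ℕ) : ℝ) ≤ Q := by exact_mod_cast this
    push_cast at this
    linarith
  have hQ1 : (0 : ℝ) < (Q : ℝ) - 1 := by linarith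
  have hdiv0 : 0 ≤ (Q : ℝ) / ((Q : ℝ) - 1) := by positivity
  refine num_sq (B := (Q : ℝ) - 1) ?_ (by linarith) hh' (by linarith) hhQ' ?_
  · split_ifs
    · simpa using hdiv0
    · positivity
  rcases Nat.lt_or_ge d 3 with hd3 | hd3
  · interval_cases d
    · -- d = 1
      have e1 : (((1 : ℕ) : ℝ) * (if 1 = 1 then (0 : ℝ) else 1) + (Q : ℝ) / ((Q : ℝ) - 1)) ^ 2 *
          ((Q : ℝ) - 1) = Q ^ 2 / ((Q : ℝ) - 1) := by
        simp
        field_simp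
      rw [e1, pow_one, div_lt_iff₀ hQ1]
      have hexp : (5 / 3 * (s - 1)) ^ 2 * (r : ℝ) * ((Q : ℝ) - 1) =
          25 / 9 * ((Q + 1 - 2 * s) * ((Q : ℝ) - 1)) * r := by
        rw [← hs2]; ring
      rw [hexp]
      rcases Nat.lt_or_ge Q 8 with h8 | h8
      · have hsu : ∀ c : ℝ, 0 ≤ c → (Q : ℝ) ≤ c ^ 2 → s ≤ c := by
          intro c hc hQc
          rw [hs]
          exact Real.sqrt_le_iff.2 ⟨hc, hQc⟩
        by_cases hQ3 : Q = 3
        · have hr4 : 4 ≤ r := by omega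
          have hr4' : (4 : ℝ) ≤ r := by exact_mod_cast hr4
          subst hQ3
          have := hsu 1.7321 (by norm_num) (by norm_num)
          push_cast at *
          nlinarith
        · have hr2 : 2 ≤ r := by omega
          have hr2' : (2 : ℝ) ≤ r := by exact_mod_cast hr2
          interval_cases Q
          · omega
          · have := hsu 2 (by norm_num) (by norm_num)
            push_cast at *
            nlinarith
          · have := hsu 2.24 (by norm_num) (by norm_num)
            push_cast at *
            nlinarith
          · have := hsu 2.45 (by norm_num) (by norm_num)
            push_cast at *
            nlinarith
          · have := hsu 2.65 (by norm_num) (by norm_num)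
            push_cast at *
            nlinarith
      · have h8' : (8 : ℝ) ≤ Q := by exact_mod_cast h8
        have hpos : 0 ≤ 25 / 9 * ((Q + 1 - 2 * s) * ((Q : ℝ) - 1)) := by
          have : (Q : ℝ) + 1 - 2 * s = (s - 1) ^ 2 := by rw [← hs2]; ring
          rw [this]
          positivity
        have h1 : 25 / 9 * ((Q + 1 - 2 * s) * ((Q : ℝ) - 1)) * 1 ≤
            25 / 9 * ((Q + 1 - 2 * s) * ((Q : ℝ) - 1)) * r :=
          mul_le_mul_of_nonneg_left hr1 hpos
        refine lt_of_lt_of_le ?_ h1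
        have hs3 : s ≤ (Q + 8) / 5.656 := by
          rw [le_div_iff₀ (by norm_num)]
          nlinarith [sq_nonneg (s - 2.828)]
        have h2 : s * ((Q : ℝ) - 1) ≤ (Q + 8) / 5.656 * ((Q : ℝ) - 1) := by gcongr
        have h4 : (Q : ℝ) ^ 2 ≥ 16 * Q - 64 := by nlinarith [sq_nonneg ((Q : ℝ) - 8)]
        have h5 : ((Q : ℝ) + 8) / 5.656 * ((Q : ℝ) - 1) = ((Q : ℝ) ^ 2 + 7 * Q - 8) / 5.656 := by
          ring
        have h6 : 25 / 9 * ((Q + 1 - 2 * s) * ((Q : ℝ) - 1)) * 1 =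
            25 / 9 * ((Q : ℝ) ^ 2 - 1 - 2 * (s * ((Q : ℝ) - 1))) := by ring
        rw [h5, le_div_iff₀ (by norm_num)] at h2
        rw [h6]
        linarith
    · -- d = 2
      have e1 : (((2 : ℕ) : ℝ) * (if 2 = 1 then (0 : ℝ) else 1) + (Q : ℝ) / ((Q : ℝ) - 1)) ^ 2 *
          ((Q : ℝ) - 1) = (3 * Q - 2) ^ 2 / ((Q : ℝ) - 1) := by
        simp
        field_simp
        ring
      rw [e1, hs2, div_lt_iff₀ hQ1]
      by_cases hQ3 : Q = 3
      · have hr4 : 3 ≤ r := by omega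
        have hr4' : (3 : ℝ) ≤ r := by exact_mod_cast hr4
        subst hQ3
        push_cast
        nlinarith
      by_cases hQ4 : Q = 4
      · have hr4 : 2 ≤ r := by omega
        have hr4' : (2 : ℝ) ≤ r := by exact_mod_cast hr4
        subst hQ4
        push_cast
        nlinarith
      have h5 : 5 ≤ Q := by omega
      have h5' : (5 : ℝ) ≤ Q := by exact_mod_cast h5
      have h1 : (5 / 3 * ((Q : ℝ) - 1)) ^ 2 * 1 * ((Q : ℝ) - 1) ≤
          (5 / 3 * ((Q : ℝ) - 1)) ^ 2 * r * ((Q : ℝ) - 1) := by gcongr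
      refine lt_of_lt_of_le ?_ h1
      nlinarith [mul_nonneg (sub_nonneg.2 h5') (sub_nonneg.2 h5'),
        mul_nonneg (mul_nonneg (sub_nonneg.2 h5') (sub_nonneg.2 h5')) (sub_nonneg.2 h5')]
  · have hd1 : d ≠ 1 := by omega
    rw [if_neg hd1, mul_one]
    have ht2 : Real.sqrt ((Q : ℝ) - 1) ^ 2 = (Q : ℝ) - 1 := Real.sq_sqrt hQ1.le
    have key := num_I_large (s := s) (t := Real.sqrt ((Q : ℝ) - 1)) (by rw [hs2]; exact hQ') hs0
      (Real.sqrt_nonneg _) (by rw [ht2, hs2]) d hd3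
    have hE : (Q : ℝ) / ((Q : ℝ) - 1) ≤ 3 / 2 := by
      rw [div_le_iff₀ hQ1]; linarith
    have h1 : ((d : ℝ) + (Q : ℝ) / ((Q : ℝ) - 1)) ^ 2 * ((Q : ℝ) - 1) ≤
        (((d : ℝ) + 3 / 2) * Real.sqrt ((Q : ℝ) - 1)) ^ 2 := by
      rw [mul_pow, ht2]
      gcongr
    have h2 : (((d : ℝ) + 3 / 2) * Real.sqrt ((Q : ℝ) - 1)) ^ 2 < (5 / 3 * (s ^ d - 1)) ^ 2 := by
      gcongr
    have h3 : (5 / 3 * (s ^ d - 1)) ^ 2 * 1 ≤ (5 / 3 * (s ^ d - 1)) ^ 2 * r := by gcongr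
    linarith

theorem num_II (Q h r d : ℕ) (hQ : 4 ≤ Q) (hhQ : Q ≤ h) (h4 : Q = 4 → h ≤ 6) (hr : 0 < r)
    (hd : 0 < d) (A : ℝ)
    (hA1 : A ≤ ((d : ℝ) * (if d = 1 then (0 : ℝ) else 1) + 2) * ((Q : ℝ) - 1))
    (hA2 : A ≤ ((d : ℝ) * (if d = 1 then (0 : ℝ) else 1) + 2) * ((h : ℝ) / 4)) :
    A < 5 / 3 * (Real.sqrt Q ^ d - 1) * Real.sqrt (h * r) := by
  have hQ' : (4 : ℝ) ≤ Q := by exact_mod_cast hQ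
  have hs2 : Real.sqrt Q ^ 2 = Q := Real.sq_sqrt (by linarith)
  have hs0 := Real.sqrt_nonneg (Q : ℝ)
  have hhQ' : (Q : ℝ) ≤ h := by exact_mod_cast hhQ
  have hsx : Real.sqrt Q ≤ Real.sqrt h := Real.sqrt_le_sqrt hhQ'
  have hx2 : Real.sqrt h ^ 2 = h := Real.sq_sqrt (by linarith)
  have hr1 : (1 : ℝ) ≤ r := by exact_mod_cast hr
  have hxr : Real.sqrt h ≤ Real.sqrt (h * r) := by
    apply Real.sqrt_le_sqrt
    nlinarith
  set s := Real.sqrt (Q : ℝ) with hs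
  set x := Real.sqrt (h : ℝ) with hx
  have hs1 : (2 : ℝ) ≤ s := by nlinarith
  have hsd : (1 : ℝ) ≤ s ^ d := one_le_pow₀ (by linarith)
  suffices A < 5 / 3 * (s ^ d - 1) * x by
    refine lt_of_lt_of_le this ?_
    apply mul_le_mul_of_nonneg_left hxr
    linarith
  rw [← hs2] at hA1
  rw [← hx2] at hA2
  rcases Nat.lt_or_ge d 3 with hd3 | hd3
  · interval_cases d
    · simp at hA1 hA2 ⊢
      by_cases hc : x < 10 / 3 * (s - 1)
      · nlinarith
      · push Not at hc
        have hQ5 : 5 ≤ Q := by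
          by_contra hlt
          have hQ4 : Q = 4 := by omega
          have h6 : (h : ℝ) ≤ 6 := by exact_mod_cast h4 hQ4
          nlinarith
        have hQ5' : (5 : ℝ) ≤ Q := by exact_mod_cast hQ5
        have hs3 : (2.2 : ℝ) ≤ s := by nlinarith
        nlinarith
    · simp at hA1 hA2 ⊢
      by_cases hc : 2.4 < x
      · have : 0 < s ^ 2 - 1 := by nlinarith
        nlinarith
      · push Not at hc
        have : 3 ≤ s ^ 2 - 1 := by nlinarith
        have : 5 * x ≤ 5 / 3 * (s ^ 2 - 1) * x := by
          apply mul_le_mul_of_nonneg_right _ (by linarith)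
          linarith
        nlinarith
  · have hd1 : d ≠ 1 := by omega
    rw [if_neg hd1, mul_one] at hA1
    exact lt_of_le_of_lt hA1 (num_II_large hs1 hsx d hd3)

theorem num_final (g h r u Q d : ℕ) (hg : g = h * (r * u)) (hh : 0 < h) (hr : 0 < r)
    (hQ : 0 < Q) (hu : Q ^ d ≤ u) (α : ℝ)
    (H : α < 5 / 3 * (Real.sqrt Q ^ d - 1) * Real.sqrt (h * r)) :
    α / Real.sqrt g < 5 / 3 * ((Real.sqrt u - 1) / Real.sqrt u) := by
  have hu0 : 0 < u := lt_of_lt_of_le (pow_pos hQ d) hu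
  have hu0' : (0 : ℝ) < u := by exact_mod_cast hu0
  have hh' : (0 : ℝ) < h := by exact_mod_cast hh
  have hr' : (0 : ℝ) < r := by exact_mod_cast hr
  have h1 : Real.sqrt g = Real.sqrt (h * r) * Real.sqrt u := by
    rw [← Real.sqrt_mul (by positivity), hg]
    push_cast
    congr 1
    ring
  have h2 : Real.sqrt Q ^ d ≤ Real.sqrt u := by
    apply Real.le_sqrt_of_sq_le
    rw [← pow_mul, mul_comm d 2, pow_mul, Real.sq_sqrt (by positivity)]
    exact_mod_cast hu
  have hsu : 0 < Real.sqrt u := Real.sqrt_pos.2 hu0'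
  have hshr : 0 < Real.sqrt (h * r) := Real.sqrt_pos.2 (by positivity)
  rw [h1, ← mul_div_assoc, ← div_div]
  apply div_lt_div_of_pos_right _ hsu
  rw [div_lt_iff₀ hshr]
  refine lt_of_lt_of_le H ?_
  gcongr

end Numeric
/-- **Lemma 5.1**: let `G` be a finite soluble group with trivial Frattini subgroup, let
`U`, `V` be as in Lemma 2.1 with `V` abelian and non-central, and let `α_U` be as in
Proposition 3.4.  Then `α_U/√|G| < (5/3)·(√|U| - 1)/√|U|`, except possibly when
`|H| < |V|` and one of the following holds:
(1) `δ = 2`, `qⁿ = 4`, `|R_G(V)| = 1`; (2) `δ = 2`, `qⁿ = 3`, `|R_G(V)| ≤ 2`;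
(3) `δ = 1`, `4 ≤ qⁿ ≤ 7`, `|R_G(V)| = 1`; (4) `δ = 1`, `qⁿ = 3`, `|R_G(V)| ≤ 3`. -/
theorem alpha_div_sqrt_lt (G : Type) [Group G] [Finite G]
    (hsol : IsSolvable G) (hfrat : frattini G = ⊥)
    (V : Type) [Group V] (a : G →* MulAut V) (X Y : Subgroup G)
    (hchief : IsChiefFactorPair G X Y) (hrep : RepresentsFactor G a X Y)
    (hab : ∀ x y : V, x * y = y * x) (hnc : ¬ IsCentralFactor G X Y)
    (U : Subgroup G) [U.Normal] (hUne : U ≠ ⊥)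
    (hcrown : crownSocle a = crownRadical a ⊔ U ∧ crownRadical a ⊓ U = ⊥)
    (S : ChiefSeries G) (α : ℝ)
    (hα : α = (if Nat.card (G ⧸ a.ker) = 1 then
        ∑ i ∈ Finset.range (deltaIso a S),
          (endCard G a : ℝ) ^ deltaIso a S /
            ((endCard G a : ℝ) ^ deltaIso a S - (endCard G a : ℝ) ^ i)
      else
        min
          (((deltaIso a S : ℝ) * (if deltaIso a S = 1 then (0:ℝ) else 1) +
              (h1Dim (G ⧸ a.ker) (QuotientGroup.kerLift a) : ℝ) +
              (endCard G a : ℝ) / ((endCard G a : ℝ) - 1)) *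
            (1 / fixProb (G ⧸ a.ker) (QuotientGroup.kerLift a)))
          ((((⌈((deltaIso a S : ℝ) * (if deltaIso a S = 1 then (0:ℝ) else 1) /
                (dimEnd G a : ℝ))⌉ : ℤ) : ℝ) +
              (endCard G a : ℝ) ^ dimEnd G a /
                ((endCard G a : ℝ) ^ dimEnd G a - 1)) *
            (Nat.card (G ⧸ a.ker) : ℝ))))
    (hexc : ¬ (Nat.card (G ⧸ a.ker) < Nat.card V ∧
      ((deltaIso a S = 2 ∧ endCard G a ^ dimEnd G a = 4 ∧
          Nat.card (crownRadical a) = 1) ∨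
       (deltaIso a S = 2 ∧ endCard G a ^ dimEnd G a = 3 ∧
          Nat.card (crownRadical a) ≤ 2) ∨
       (deltaIso a S = 1 ∧ 4 ≤ endCard G a ^ dimEnd G a ∧
          endCard G a ^ dimEnd G a ≤ 7 ∧ Nat.card (crownRadical a) = 1) ∨
       (deltaIso a S = 1 ∧ endCard G a ^ dimEnd G a = 3 ∧
          Nat.card (crownRadical a) ≤ 3)))) :
    α / Real.sqrt (Nat.card G) <
      5 / 3 * ((Real.sqrt (Nat.card U) - 1) / Real.sqrt (Nat.card U)) := by
  have hi : Irr a := irr_of_chief hchief hrep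
  have hfin : Finite V := by
    obtain ⟨f, hs, -⟩ := hrep
    exact Finite.of_surjective f hs
  have hnt : Nontrivial V := by
    obtain ⟨f, hs, hk, -⟩ := hrep
    obtain ⟨x, hx, hxY⟩ := Set.exists_of_ssubset hchief.2.2.1
    exact ⟨f ⟨x, hx⟩, 1, fun h => hxY ((hk _).1 h)⟩
  have hker : a.ker ≠ ⊤ := by
    intro h
    apply hnc
    intro g x hx
    exact comm_mem hrep hchief.1 (by rw [h]; trivial) hx
  have hH : Nontrivial (G ⧸ a.ker) := by
    by_contra hcon
    rw [not_nontrivial_iff_subsingleton] at hcon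
    exact hker (QuotientGroup.subgroup_eq_top_of_subsingleton _ hcon)
  have hH2 : 2 ≤ Nat.card (G ⧸ a.ker) := Finite.one_lt_card
  have hb := QuotientGroup.kerLift_injective a
  have hib : Irr (QuotientGroup.kerLift a) := by
    intro W hW
    exact hi W fun g v hv => hW (QuotientGroup.mk g) v hv
  obtain ⟨N, hN⟩ : (crownNormals a).Nonempty := by
    by_contra hcon
    rw [Set.not_nonempty_iff_eq_empty] at hcon
    have h2 := hcrown.2
    rw [crownRadical, hcon, sInf_empty, top_inf_eq] at h2
    exact hUne h2
  have hsoc : crownSocle a = a.ker := crownSocle_eq hab hi hN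
  have hcC : Nat.card a.ker = Nat.card (crownRadical a) * Nat.card U := by
    have h := card_sup_mul_card_inf (crownRadical a) U
    rw [hcrown.2, ← hcrown.1, hsoc, Subgroup.card_bot, mul_one] at h
    exact h
  have hcG : Nat.card G = Nat.card (G ⧸ a.ker) * (Nat.card (crownRadical a) * Nat.card U) := by
    rw [← hcC]
    exact Subgroup.card_eq_card_quotient_mul_card_subgroup _
  have hr0 : 0 < Nat.card (crownRadical a) := Nat.card_pos
  have hdle : Nat.card V ^ deltaIso a S ≤ Nat.card U := by
    have h := delta_le hab hi hN S
    rw [hcC, mul_comm (Nat.card (crownRadical a))] at h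
    exact Nat.le_of_mul_le_mul_right h hr0
  have hd0 : 0 < deltaIso a S := delta_pos hab hi hN S
  obtain ⟨hq2, hqn⟩ := endCard_pow hab hi
  have hm : h1Dim (G ⧸ a.ker) (QuotientGroup.kerLift a) = 0 := h1Dim_zero hab hib hb hH
  have hfac := card_le_factorial hb
  have hQ2 : 2 ≤ Nat.card V := Finite.one_lt_card
  have hQ3 : 3 ≤ Nat.card V := by
    rcases Nat.lt_or_ge 2 (Nat.card V) with h | h
    · exact h
    · have h2 : Nat.card V = 2 := le_antisymm h hQ2
      rw [h2] at hfac
      simp at hfac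
      omega
  have hn0 : 0 < dimEnd G a := by
    rcases Nat.eq_zero_or_pos (dimEnd G a) with h | h
    · rw [h, pow_zero] at hqn
      omega
    · exact h
  have hqnR : (endCard G a : ℝ) ^ dimEnd G a = (Nat.card V : ℝ) := by exact_mod_cast hqn
  rw [if_neg (by omega), hm, hqnR] at hα
  rw [hqn] at hexc
  refine num_final (Nat.card G) (Nat.card (G ⧸ a.ker)) (Nat.card (crownRadical a)) (Nat.card U)
    (Nat.card V) (deltaIso a S) hcG (by omega) hr0 (by omega) hdle α ?_
  generalize deltaIso a S = d at *
  have hθ : ((d : ℝ) * (if d = 1 then (0 : ℝ) else 1)) =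
      ((d * (if d = 1 then 0 else 1) : ℕ) : ℝ) := by
    split_ifs <;> simp
  rcases Nat.lt_or_ge (Nat.card (G ⧸ a.ker)) (Nat.card V) with hlt | hge
  · have hexc2 := fun h => hexc ⟨hlt, h⟩
    refine lt_of_le_of_lt ?_ (num_I _ _ _ _ hQ3 (by omega) hlt hr0 hd0 hexc2)
    rw [hα]
    refine (min_le_right _ _).trans ?_
    refine mul_le_mul_of_nonneg_right ?_ (Nat.cast_nonneg _)
    refine add_le_add_left ?_ _
    rw [hθ]
    have h1 : ⌈(((d * (if d = 1 then 0 else 1) : ℕ) : ℝ) / (dimEnd G a : ℝ))⌉ ≤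
        ((d * (if d = 1 then 0 else 1) : ℕ) : ℤ) := by
      rw [Int.ceil_le]
      rw [Int.cast_natCast]
      apply div_le_self (Nat.cast_nonneg _)
      exact_mod_cast hn0
    exact_mod_cast h1
  · have hQ4 : 4 ≤ Nat.card V := by
      rcases Nat.lt_or_ge 3 (Nat.card V) with h | h
      · exact h
      · have h2 : Nat.card V = 3 := le_antisymm h hQ3
        rw [h2] at hfac hge
        simp [Nat.factorial] at hfac
        omega
    have hQ46 : Nat.card V = 4 → Nat.card (G ⧸ a.ker) ≤ 6 := by
      intro h
      rw [h] at hfac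
      simpa [Nat.factorial] using hfac
    have hf4 := four_le_fix hb hge
    have hfm := card_fix_mul (QuotientGroup.kerLift a)
    have hA : α ≤ ((d : ℝ) * (if d = 1 then (0 : ℝ) else 1) + 2) *
        (1 / fixProb (G ⧸ a.ker) (QuotientGroup.kerLift a)) := by
      rw [hα]
      refine (min_le_left _ _).trans ?_
      refine mul_le_mul_of_nonneg_right ?_ ?_
      · have hq2R : (2 : ℝ) ≤ endCard G a := by exact_mod_cast hq2
        have : (endCard G a : ℝ) / ((endCard G a : ℝ) - 1) ≤ 2 := by
          rw [div_le_iff₀ (by linarith)]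
          linarith
        push_cast
        linarith
      · unfold fixProb
        positivity
    have hc0 : 0 ≤ (d : ℝ) * (if d = 1 then (0 : ℝ) else 1) + 2 := by
      rw [hθ]
      positivity
    unfold fixProb at hA
    rw [one_div_div] at hA
    generalize Nat.card {h : G ⧸ a.ker // ∃ v : V, v ≠ 1 ∧ QuotientGroup.kerLift a h v = v} = F
      at *
    have hF4 : (4 : ℝ) ≤ F := by exact_mod_cast hf4
    refine num_II _ _ _ _ hQ4 hge hQ46 hr0 hd0 α ?_ ?_
    · refine hA.trans (mul_le_mul_of_nonneg_left ?_ hc0)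
      rw [div_le_iff₀ (by linarith)]
      have h1 : ((Nat.card (G ⧸ a.ker) : ℕ) : ℝ) ≤ ((F * (Nat.card V - 1) : ℕ) : ℝ) := by
        exact_mod_cast hfm
      rw [Nat.cast_mul, Nat.cast_sub (by omega), Nat.cast_one] at h1
      linarith
    · refine hA.trans (mul_le_mul_of_nonneg_left ?_ hc0)
      gcongr

end ChebotarevPaper
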